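/- arXiv:1809.09892 — 12 statements merged into one kernel-verified Lean document; each statement's English description precedes it below -/
import Mathlib

section
/- Let K be an algebraically closed field with a nontrivial non-archimedean valuation v: K* → ℝ, valuation ring R, and residue field k of characteristic different from 2 and 3. Let a, b ∈ R and suppose W: y² = x³ + a·(x − b)² is a minimal integral Weierstrass model of an elliptic curve E over K (in particular its discriminant Δ is nonzero). Let a' ∈ K be a square root of a and P = (0, a'·b) ∈ E(K). Suppose E has multiplicative reduction, i.e. v(Δ) > 0 and v(c₄) = 0 for this minimal model, and suppose P reduces to the singular point of the reduced curve Ē over k, i.e. both partial derivatives of the reduced Weierstrass polynomial vanish at the reduction of P. Then v(a) = 0 and v(b) > 0. -/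
open WeierstrassCurve

/-- A Weierstrass model is *integral* with respect to the additive valuation `v` if all of its
coefficients have nonnegative valuation, i.e. lie in the valuation ring `R`. -/
def IsIntegralModel {K : Type*} [Field K] (v : AddValuation K (WithTop ℝ))
    (W : WeierstrassCurve K) : Prop :=
  0 ≤ v W.a₁ ∧ 0 ≤ v W.a₂ ∧ 0 ≤ v W.a₃ ∧ 0 ≤ v W.a₄ ∧ 0 ≤ v W.a₆

/-- `W` is a Weierstrass model of (the elliptic curve defined by) `E` if it is obtained from `E`
by an admissible change of variables `x = u²x + r`, `y = u³y + u²sx + t`. -/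
def IsModelOf {K : Type*} [Field K] (E W : WeierstrassCurve K) : Prop :=
  ∃ C : VariableChange K, W = C • E

/-- `W` is a *minimal integral Weierstrass model* of `E`: it is an integral model of `E` whose
discriminant has minimal valuation among all integral models of `E`. -/
def IsMinimalModel {K : Type*} [Field K] (v : AddValuation K (WithTop ℝ))
    (E W : WeierstrassCurve K) : Prop :=
  IsModelOf E W ∧ IsIntegralModel v W ∧
    ∀ W' : WeierstrassCurve K, IsModelOf E W' → IsIntegralModel v W' → v W.Δ ≤ v W'.Δ

/-- Let `K` be an algebraically closed field with a nontrivial non-archimedean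
valuation `v` whose residue field has characteristic ≠ 2, 3 (encoded by `v 2 = 0`, `v 3 = 0`).
Let `a, b` lie in the valuation ring and suppose `W : y² = x³ + a(x − b)²` is a minimal
integral Weierstrass model of an elliptic curve (so `Δ ≠ 0`).  Let `a'` be a square root of
`a` and `P = (0, a'·b)`.  Suppose `E` has multiplicative reduction (`v Δ > 0`, `v c₄ = 0`)
and that `P` reduces to the singular point of the reduced curve, i.e. both partial derivatives
of the reduced Weierstrass polynomial vanish at the reduction of `P`: the partial derivatives at
`P` are `∂/∂x = 2ab` and `∂/∂y = 2a'b`, and their valuations are positive.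
Then `v a = 0` and `v b > 0`. -/
theorem statement2 {K : Type*} [Field K] [IsAlgClosed K] (v : AddValuation K (WithTop ℝ))
    (hv : ∃ x : K, x ≠ 0 ∧ v x ≠ 0) (hv2 : v (2 : K) = 0) (hv3 : v (3 : K) = 0)
    (a b a' : K) (ha : 0 ≤ v a) (hb : 0 ≤ v b) (ha' : a' ^ 2 = a)
    (hΔ : (⟨0, a, 0, -(2 * a * b), a * b ^ 2⟩ : WeierstrassCurve K).Δ ≠ 0)
    (hmin : IsMinimalModel v (⟨0, a, 0, -(2 * a * b), a * b ^ 2⟩ : WeierstrassCurve K)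
      (⟨0, a, 0, -(2 * a * b), a * b ^ 2⟩ : WeierstrassCurve K))
    (hmult : 0 < v (⟨0, a, 0, -(2 * a * b), a * b ^ 2⟩ : WeierstrassCurve K).Δ ∧
      v (⟨0, a, 0, -(2 * a * b), a * b ^ 2⟩ : WeierstrassCurve K).c₄ = 0)
    (hsingX : 0 < v (2 * a * b)) (hsingY : 0 < v (2 * a' * b)) :
    v a = 0 ∧ 0 < v b := by
  have hc : (⟨0, a, 0, -(2 * a * b), a * b ^ 2⟩ : WeierstrassCurve K).c₄
      = a * (2 ^ 4 * (a + 2 * 3 * b)) := by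
    simp only [WeierstrassCurve.c₄, WeierstrassCurve.b₂, WeierstrassCurve.b₄]
    ring
  have h4 := hmult.2
  rw [hc, v.map_mul] at h4
  have hq : 0 ≤ v (2 ^ 4 * (a + 2 * 3 * b)) := by
    rw [v.map_mul, v.map_pow, hv2, smul_zero, zero_add]
    refine v.map_le_add ha ?_
    rw [v.map_mul, v.map_mul, hv2, hv3, zero_add, zero_add]
    exact hb
  have hva : v a = 0 := by
    refine le_antisymm ?_ ha
    calc v a ≤ v a + v (2 ^ 4 * (a + 2 * 3 * b)) := le_add_of_nonneg_right hq
      _ = 0 := h4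
  refine ⟨hva, ?_⟩
  rw [v.map_mul, v.map_mul, hv2, hva, zero_add, zero_add] at hsingX
  exact hsingX
end

section
/- Let K be an algebraically closed field with a nontrivial non-archimedean valuation v: K* → ℝ, valuation ring R, and residue field k of characteristic different from 2 and 3. Let E be an elliptic curve over K with v(j(E)) < 0. Then there exist a, b ∈ R with v(a) = 0 and 0 < v(b) < ∞ such that y² = x³ + a·(x − b)² is a minimal integral Weierstrass model of E. -/
open WeierstrassCurve

theorem aux_mul_nonneg {K : Type*} [Field K] (v : AddValuation K (WithTop ℝ)) {x y : K}
    (hx : 0 ≤ v x) (hy : 0 ≤ v y) : 0 ≤ v (x * y) := by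
  rw [AddValuation.map_mul]; exact add_nonneg hx hy

theorem aux_pow_nonneg {K : Type*} [Field K] (v : AddValuation K (WithTop ℝ)) {x : K}
    (hx : 0 ≤ v x) (n : ℕ) : 0 ≤ v (x ^ n) := by
  rw [AddValuation.map_pow]; exact nsmul_nonneg hx n

theorem aux_nat_nonneg {K : Type*} [Field K] (v : AddValuation K (WithTop ℝ)) (n : ℕ) :
    0 ≤ v (n : K) := by
  induction n with
  | zero => simp
  | succ n ih =>
    push_cast
    exact AddValuation.map_le_add v ih (by simp)

theorem aux_prod {K : Type*} [Field K] (v : AddValuation K (WithTop ℝ)) (s : Multiset K)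
    (h : ∀ r ∈ s, v r ≤ 0) : v (s.map (fun r => 0 - r)).prod ≤ 0 := by
  induction s using Multiset.induction_on with
  | empty => simp
  | cons a s ih =>
    rw [Multiset.map_cons, Multiset.prod_cons, AddValuation.map_mul, zero_sub,
      AddValuation.map_neg]
    exact add_nonpos (h a (by simp)) (ih fun r hr => h r (by simp [hr]))

theorem aux_root {K : Type*} [Field K] [IsAlgClosed K] (v : AddValuation K (WithTop ℝ))
    (hv2 : v (2 : K) = 0) (hv3 : v (3 : K) = 0) (t : K) (ht : 0 < v t) :
    ∃ b : K, 0 < v b ∧ 27 * b ^ 4 + 4 * b ^ 3 + 256 * t * (1 + 6 * b) ^ 3 = 0 := by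
  have h27 : v (27 : K) = 0 := by
    rw [show (27 : K) = 3 ^ 3 by norm_num, AddValuation.map_pow, hv3]; simp
  have h256 : v (256 : K) = 0 := by
    rw [show (256 : K) = 2 ^ 8 by norm_num, AddValuation.map_pow, hv2]; simp
  have h270 : (27 : K) ≠ 0 := by
    intro h; rw [h, AddValuation.map_zero] at h27; exact absurd h27 (by simp)
  let p : Polynomial K := .C 27 * .X ^ 4 + .C (4 + 256 * 216 * t) * .X ^ 3 +
    .C (256 * 108 * t) * .X ^ 2 + .C (256 * 18 * t) * .X + .C (256 * t)
  have hl : p.leadingCoeff = 27 := by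
    have hd : p.natDegree = 4 := by
      simp only [p]; compute_degree!
    rw [Polynomial.leadingCoeff, hd]
    simp only [p, Polynomial.coeff_add, Polynomial.coeff_C_mul, Polynomial.coeff_X_pow,
      Polynomial.coeff_X, Polynomial.coeff_C]
    norm_num
  have hp0 : p ≠ 0 := by
    intro h; rw [h, Polynomial.leadingCoeff_zero] at hl; exact h270 hl.symm
  have he := (IsAlgClosed.splits p).eval_eq_prod_roots 0
  rw [hl] at he
  have he0 : p.eval 0 = 256 * t := by simp [p]
  by_contra! hcon
  have hs := aux_prod v p.roots (by
    intro r hr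
    by_contra! hr0
    refine hcon r hr0 ?_
    have h1 : p.eval r = 0 := (Polynomial.mem_roots hp0).1 hr
    simp only [p, Polynomial.eval_add, Polynomial.eval_mul, Polynomial.eval_C,
      Polynomial.eval_pow, Polynomial.eval_X] at h1
    linear_combination h1)
  have h2 := congrArg v he
  rw [he0, AddValuation.map_mul, AddValuation.map_mul, h256, h27, zero_add, zero_add] at h2
  rw [← h2] at hs
  exact absurd ht (not_lt.2 hs)

/-- Let `K` be an algebraically closed field with a nontrivial non-archimedean
valuation `v` whose residue field has characteristic ≠ 2, 3, and let `E` be an elliptic curve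
over `K` with `v (j E) < 0`.  Then there exist `a, b ∈ K` with `v a = 0` and
`0 < v b < ∞` such that `y² = x³ + a(x − b)²` is a minimal integral Weierstrass model
of `E`. -/
theorem statement3 {K : Type*} [Field K] [IsAlgClosed K] (v : AddValuation K (WithTop ℝ))
    (hv : ∃ x : K, x ≠ 0 ∧ v x ≠ 0) (hv2 : v (2 : K) = 0) (hv3 : v (3 : K) = 0)
    (E : WeierstrassCurve K) (hΔ : E.Δ ≠ 0) (hj : v (E.c₄ ^ 3 / E.Δ) < 0) :
    ∃ a b : K, v a = 0 ∧ 0 < v b ∧ v b ≠ ⊤ ∧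
      IsMinimalModel v E (⟨0, a, 0, -(2 * a * b), a * b ^ 2⟩ : WeierstrassCurve K) := by
  have hnat : ∀ n : ℕ, 0 ≤ v (n : K) := aux_nat_nonneg v
  have hc : E.c₄ ≠ 0 := by
    intro h; rw [h] at hj; simp at hj
  have ht : 0 < v (E.Δ / E.c₄ ^ 3) := by
    by_contra! hle
    have h1 : v (E.c₄ ^ 3 / E.Δ * (E.Δ / E.c₄ ^ 3)) = 0 := by
      rw [show E.c₄ ^ 3 / E.Δ * (E.Δ / E.c₄ ^ 3) = 1 by field_simp]; simp
    rw [AddValuation.map_mul] at h1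
    exact absurd h1 (ne_of_lt (lt_of_le_of_lt (add_le_of_nonpos_right hle) hj))
  obtain ⟨b, hb, hbe⟩ := aux_root v hv2 hv3 _ ht
  have h2 : (2 : K) ≠ 0 := by
    intro h; rw [h, AddValuation.map_zero] at hv2; exact absurd hv2 (by simp)
  have h16 : v (16 : K) = 0 := by
    rw [show (16 : K) = 2 ^ 4 by norm_num, AddValuation.map_pow, hv2]; simp
  have h160 : (16 : K) ≠ 0 := by
    rw [show (16 : K) = 2 ^ 4 by norm_num]; exact pow_ne_zero _ h2
  have h6b : v (1 + 6 * b) = 0 := by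
    have h6 : 0 < v (6 * b) := by
      rw [AddValuation.map_mul]
      exact lt_of_lt_of_le hb (le_add_of_nonneg_left (by exact_mod_cast hnat 6))
    have := AddValuation.map_add_eq_of_lt_left v (x := 1) (y := 6 * b) (by simpa using h6)
    simpa using this
  have h6b0 : 1 + 6 * b ≠ 0 := by
    intro h; rw [h, AddValuation.map_zero] at h6b; exact absurd h6b (by simp)
  have hb0 : b ≠ 0 := by
    rintro rfl
    have h256 : (256 : K) ≠ 0 := by
      rw [show (256 : K) = 2 ^ 8 by norm_num]; exact pow_ne_zero _ h2
    have : E.Δ / E.c₄ ^ 3 ≠ 0 := div_ne_zero hΔ (pow_ne_zero _ hc)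
    apply mul_ne_zero h256 this
    linear_combination hbe
  refine ⟨1, b, by simp, hb, (AddValuation.ne_top_iff v).2 hb0, ?_⟩
  set W : WeierstrassCurve K := ⟨0, 1, 0, -(2 * 1 * b), 1 * b ^ 2⟩ with hW
  have hWc : W.c₄ = 16 * (1 + 6 * b) := by
    simp only [hW, WeierstrassCurve.c₄, WeierstrassCurve.b₂, WeierstrassCurve.b₄]; ring
  have hWd : W.Δ = E.Δ / E.c₄ ^ 3 * W.c₄ ^ 3 := by
    rw [hWc]
    generalize E.Δ / E.c₄ ^ 3 = t at hbe
    simp only [hW, WeierstrassCurve.Δ, WeierstrassCurve.b₂, WeierstrassCurve.b₄,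
      WeierstrassCurve.b₆, WeierstrassCurve.b₈]
    linear_combination (-16) * hbe
  have hWc0 : W.c₄ ≠ 0 := by rw [hWc]; exact mul_ne_zero h160 h6b0
  have hvc : v W.c₄ = 0 := by rw [hWc, AddValuation.map_mul, h16, h6b, zero_add]
  have hWd0 : W.Δ ≠ 0 := by
    rw [hWd]; exact mul_ne_zero (div_ne_zero hΔ (pow_ne_zero _ hc)) (pow_ne_zero _ hWc0)
  have : E.IsElliptic := ⟨isUnit_iff_ne_zero.2 hΔ⟩
  have : W.IsElliptic := ⟨isUnit_iff_ne_zero.2 hWd0⟩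
  have hjj : E.j = W.j := by
    simp only [WeierstrassCurve.j, Units.val_inv_eq_inv_val, WeierstrassCurve.coe_Δ']
    rw [hWd]; field_simp
  obtain ⟨C, hC⟩ := WeierstrassCurve.exists_variableChange_of_j_eq E W hjj
  refine ⟨⟨C, hC.symm⟩, ⟨by simp [hW], by simp [hW], by simp [hW], ?_, ?_⟩, ?_⟩
  · change 0 ≤ v (-(2 * 1 * b))
    rw [AddValuation.map_neg, mul_one, AddValuation.map_mul, hv2, zero_add]
    exact hb.le
  · change 0 ≤ v (1 * b ^ 2)
    rw [one_mul]; exact aux_pow_nonneg v hb.le 2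
  · rintro W' ⟨D, hD⟩ ⟨i1, i2, i3, i4, i6⟩
    have hW' : W' = (D * C⁻¹) • W := by
      rw [hD, ← hC, mul_smul, inv_smul_smul]
    have hc' : 0 ≤ v W'.c₄ := by
      have e2 : 0 ≤ v (2 : K) := by exact_mod_cast hnat 2
      have e4 : 0 ≤ v (4 : K) := by exact_mod_cast hnat 4
      have e24 : 0 ≤ v (24 : K) := by exact_mod_cast hnat 24
      rw [WeierstrassCurve.c₄, WeierstrassCurve.b₂, WeierstrassCurve.b₄]
      exact AddValuation.map_le_sub v
        (aux_pow_nonneg v (AddValuation.map_le_add v (aux_pow_nonneg v i1 2)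
          (aux_mul_nonneg v e4 i2)) 2)
        (aux_mul_nonneg v e24 (AddValuation.map_le_add v (aux_mul_nonneg v e2 i4)
          (aux_mul_nonneg v i1 i3)))
    rw [hW', WeierstrassCurve.variableChange_c₄, AddValuation.map_mul, hvc, add_zero] at hc'
    rw [hW', WeierstrassCurve.variableChange_Δ, AddValuation.map_mul]
    refine le_add_of_nonneg_left ?_
    have := aux_pow_nonneg v hc' 3
    rwa [← pow_mul] at this
end

section
/- Let K be a field of characteristic different from 2, let a', b ∈ K, and let (x, y) ∈ K² satisfy y² = x³ + a'²·(x − b)² with x ≠ 0. Then y − a'·(x − b) ≠ 0 and y + a'·(x − b) ≠ 0, and setting f = x²/(y − a'(x − b)) and g = x²/(y + a'(x − b)), one has f·g = x, f²·g = y + a'(x − b), and the relation f·g² + 2a'·f·g − 2a'·b − f²·g = 0. -/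
/-- Let `K` be a field of characteristic ≠ 2, let `a', b ∈ K`, and let
`(x, y) ∈ K²` satisfy `y² = x³ + a'²·(x − b)²` with `x ≠ 0`.  Then `y − a'(x − b) ≠ 0` and
`y + a'(x − b) ≠ 0`, and setting `f = x²/(y − a'(x − b))` and `g = x²/(y + a'(x − b))` one has
`f·g = x`, `f²·g = y + a'(x − b)` and `f·g² + 2a'·f·g − 2a'·b − f²·g = 0`. -/
theorem statement4 {K : Type*} [Field K] (h2 : (2 : K) ≠ 0) (a' b x y : K)
    (heq : y ^ 2 = x ^ 3 + a' ^ 2 * (x - b) ^ 2) (hx : x ≠ 0) :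
    y - a' * (x - b) ≠ 0 ∧ y + a' * (x - b) ≠ 0 ∧
    (x ^ 2 / (y - a' * (x - b))) * (x ^ 2 / (y + a' * (x - b))) = x ∧
    (x ^ 2 / (y - a' * (x - b))) ^ 2 * (x ^ 2 / (y + a' * (x - b))) = y + a' * (x - b) ∧
    (x ^ 2 / (y - a' * (x - b))) * (x ^ 2 / (y + a' * (x - b))) ^ 2
      + 2 * a' * ((x ^ 2 / (y - a' * (x - b))) * (x ^ 2 / (y + a' * (x - b))))
      - 2 * a' * b
      - (x ^ 2 / (y - a' * (x - b))) ^ 2 * (x ^ 2 / (y + a' * (x - b))) = 0 := by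
  have huv : (y - a' * (x - b)) * (y + a' * (x - b)) = x ^ 3 := by linear_combination heq
  have huv' : (y - a' * (x - b)) - (y + a' * (x - b)) + 2 * a' * x - 2 * a' * b = 0 := by ring
  generalize y - a' * (x - b) = u at *
  generalize y + a' * (x - b) = v at *
  have h3 : u * v ≠ 0 := by rw [huv]; exact pow_ne_zero 3 hx
  have hu : u ≠ 0 := left_ne_zero_of_mul h3
  have hv : v ≠ 0 := right_ne_zero_of_mul h3
  have e1 : x ^ 2 / u * (x ^ 2 / v) = x := by
    rw [div_mul_div_comm, huv, div_eq_iff (pow_ne_zero 3 hx)]; ring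
  have e2 : (x ^ 2 / u) ^ 2 * (x ^ 2 / v) = v := by
    have : x * (x ^ 2 / u) = v := by
      rw [← mul_div_assoc, div_eq_iff hu]; linear_combination -huv
    linear_combination (x ^ 2 / u) * e1 + this
  have e3 : (x ^ 2 / u) * (x ^ 2 / v) ^ 2 = u := by
    have : x * (x ^ 2 / v) = u := by
      rw [← mul_div_assoc, div_eq_iff hv]; linear_combination -huv
    linear_combination (x ^ 2 / v) * e1 + this
  refine ⟨hu, hv, e1, e2, ?_⟩
  rw [e1, e2, e3]
  linear_combination huv'
end

section
/- Let K be a field of characteristic different from 2 and 3, let a', b ∈ K with a'·b ≠ 0, and suppose the Weierstrass equation E: y² = x³ + a'²·(x − b)² has nonzero discriminant, so that E is an elliptic curve. Then the point P = (0, a'·b) lies in E(K), P ≠ O, and 3·P = O in the group law of E; that is, P is a point of exact order 3. -/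
open WeierstrassCurve

open scoped Classical in
/-- Let `K` be a field of characteristic ≠ 2, 3, let `a', b ∈ K` with
`a'·b ≠ 0`, and suppose the Weierstrass equation `E : y² = x³ + a'²·(x − b)²` has nonzero
discriminant.  Then `P = (0, a'·b)` lies in `E(K)`, `P ≠ O`, and `3·P = O`; that is, `P` is a
point of exact order 3. -/
theorem statement7 {K : Type*} [Field K] (h2 : (2 : K) ≠ 0) (h3 : (3 : K) ≠ 0) (a' b : K)
    (hab : a' * b ≠ 0)
    (hΔ : (⟨0, a' ^ 2, 0, -(2 * a' ^ 2 * b), a' ^ 2 * b ^ 2⟩ : WeierstrassCurve K).Δ ≠ 0) :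
    ∃ h : (⟨0, a' ^ 2, 0, -(2 * a' ^ 2 * b), a' ^ 2 * b ^ 2⟩ :
        WeierstrassCurve K).toAffine.Nonsingular 0 (a' * b),
      Affine.Point.some _ _ h ≠ 0 ∧ 3 • (Affine.Point.some _ _ h) = 0 ∧
        addOrderOf (Affine.Point.some _ _ h) = 3 := by
  have hne : a' * b ≠ -(a' * b) := by
    intro h
    have h' : (2 : K) * (a' * b) = 0 := by linear_combination h
    exact (mul_ne_zero h2 hab) h'
  have h : (⟨0, a' ^ 2, 0, -(2 * a' ^ 2 * b), a' ^ 2 * b ^ 2⟩ :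
        WeierstrassCurve K).toAffine.Nonsingular 0 (a' * b) := by
    rw [Affine.nonsingular_iff, Affine.equation_iff]
    refine ⟨by simp; ring, Or.inr ?_⟩
    simpa using hne
  have hY : a' * b ≠ (⟨0, a' ^ 2, 0, -(2 * a' ^ 2 * b), a' ^ 2 * b ^ 2⟩ :
        WeierstrassCurve K).toAffine.negY 0 (a' * b) := by
    simpa [Affine.negY] using hne
  have hs : (⟨0, a' ^ 2, 0, -(2 * a' ^ 2 * b), a' ^ 2 * b ^ 2⟩ :
        WeierstrassCurve K).toAffine.slope 0 0 (a' * b) (a' * b) = -a' := by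
    rw [Affine.slope_of_Y_ne rfl hY, div_eq_iff (sub_ne_zero.mpr hY)]
    simp [Affine.negY]
    ring
  have hdbl : Affine.Point.some _ _ h + Affine.Point.some _ _ h
      = -Affine.Point.some _ _ h := by
    rw [Affine.Point.add_self_of_Y_ne hY, Affine.Point.neg_some]
    simp only [Affine.Point.some.injEq, hs]
    constructor
    · simp [Affine.addX]
    · simp [Affine.addY, Affine.negAddY, Affine.addX, Affine.negY]
  have h3P : 3 • Affine.Point.some _ _ h = 0 := by
    rw [succ_nsmul, two_nsmul, hdbl, neg_add_cancel]
  haveI : Fact (Nat.Prime 3) := ⟨Nat.prime_three⟩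
  exact ⟨h, Affine.Point.some_ne_zero h, h3P,
    addOrderOf_eq_prime h3P (Affine.Point.some_ne_zero h)⟩
end

section
/- Let K be an algebraically closed field of characteristic different from 2 and 3, and let E ⊂ P² be an elliptic curve given by a homogeneous Weierstrass cubic F(X,Y,Z) = 0 with identity O = [0:1:0]. Let P be an affine K-point of E and let L be the tangent line to E at P, i.e. the line (∂F/∂X)(P)·X + (∂F/∂Y)(P)·Y + (∂F/∂Z)(P)·Z = 0. Then 3·P = O in the group law of E if and only if P is an inflection point, i.e. the only point of E(K) lying on L is P itself. -/
open WeierstrassCurve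

open scoped Classical in
/-- inflection points are exactly the 3-torsion points.  Let `K` be an
algebraically closed field of characteristic ≠ 2, 3 and let `E ⊂ ℙ²` be an elliptic curve given
by a homogeneous Weierstrass cubic `F(X,Y,Z) = 0` with identity `O = [0:1:0]`.  Let
`P = (x₀, y₀)` be an affine point of `E` and let `L` be the tangent line at `P`, whose
coefficients are the partial derivatives `∂F/∂X`, `∂F/∂Y`, `∂F/∂Z` evaluated at `(x₀, y₀, 1)`.
Then `3·P = O` if and only if `P` is an inflection point, i.e. the only point of `E(K)` lying on
`L` is `P` itself: every affine point on `L` equals `P`, and `O` does not lie on `L` (the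
`Y`-coefficient `∂F/∂Y(P) = 2y₀ + a₁x₀ + a₃` is nonzero). -/
theorem statement8 {K : Type*} [Field K] [IsAlgClosed K]
    (h2 : (2 : K) ≠ 0) (h3 : (3 : K) ≠ 0)
    (W : WeierstrassCurve K) (hΔ : W.Δ ≠ 0) (x₀ y₀ : K)
    (h : W.toAffine.Nonsingular x₀ y₀) :
    3 • (Affine.Point.some x₀ y₀ h) = 0 ↔
      ((∀ (x y : K) (h' : W.toAffine.Nonsingular x y),
          (W.a₁ * y₀ - 3 * x₀ ^ 2 - 2 * W.a₂ * x₀ - W.a₄) * x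
            + (2 * y₀ + W.a₁ * x₀ + W.a₃) * y
            + (y₀ ^ 2 + W.a₁ * x₀ * y₀ + 2 * W.a₃ * y₀
                - W.a₂ * x₀ ^ 2 - 2 * W.a₄ * x₀ - 3 * W.a₆) = 0 →
          Affine.Point.some x y h' = Affine.Point.some x₀ y₀ h) ∧
        2 * y₀ + W.a₁ * x₀ + W.a₃ ≠ 0) := by
  have heq := (Affine.equation_iff (W := W.toAffine) x₀ y₀).mp h.1
  change y₀ ^ 2 + W.a₁ * x₀ * y₀ + W.a₃ * y₀ = x₀ ^ 3 + W.a₂ * x₀ ^ 2 + W.a₄ * x₀ + W.a₆ at heq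
  have hneg : y₀ - W.toAffine.negY x₀ y₀ = 2 * y₀ + W.a₁ * x₀ + W.a₃ := by
    simp only [Affine.negY]; ring
  have h3smul : 3 • (Affine.Point.some x₀ y₀ h) =
      (Affine.Point.some x₀ y₀ h + Affine.Point.some x₀ y₀ h) + Affine.Point.some x₀ y₀ h := by
    rw [succ_nsmul, two_nsmul]
  by_cases hD : 2 * y₀ + W.a₁ * x₀ + W.a₃ = 0
  · refine iff_of_false ?_ (fun hh => hh.2 hD)
    have hy : y₀ = W.toAffine.negY x₀ y₀ := by
      rw [← sub_eq_zero, hneg, hD]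
    rw [h3smul, Affine.Point.add_self_of_Y_eq hy, zero_add]
    exact Affine.Point.some_ne_zero h
  · have hy : y₀ ≠ W.toAffine.negY x₀ y₀ := by
      rwa [← sub_ne_zero, hneg]
    have hsl := Affine.slope_of_Y_ne (W := W.toAffine) rfl hy
    set l := W.toAffine.slope x₀ x₀ y₀ y₀ with hl
    have hlD : l * (2 * y₀ + W.a₁ * x₀ + W.a₃) =
        3 * x₀ ^ 2 + 2 * W.a₂ * x₀ + W.a₄ - W.a₁ * y₀ := by
      rw [hneg] at hsl
      rw [hsl, div_mul_cancel₀ _ hD]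
    obtain ⟨X, Y, hXY, h2P, hX, hY⟩ : ∃ (X Y : K) (hXY : W.toAffine.Nonsingular X Y),
        -(Affine.Point.some x₀ y₀ h + Affine.Point.some x₀ y₀ h) = Affine.Point.some X Y hXY ∧
        X = l ^ 2 + W.a₁ * l - W.a₂ - x₀ - x₀ ∧ Y = l * (X - x₀) + y₀ := by
      rw [Affine.Point.add_self_of_Y_ne hy, Affine.Point.neg_some]
      refine ⟨_, _, _, rfl, rfl, ?_⟩
      simp only [Affine.addY, Affine.negAddY, Affine.negY, ← hl]
      ring
    have key : 3 • (Affine.Point.some x₀ y₀ h) = 0 ↔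
        Affine.Point.some X Y hXY = Affine.Point.some x₀ y₀ h := by
      rw [h3smul, ← h2P, add_eq_zero_iff_neg_eq]
    rw [key]
    constructor
    · intro hP
      refine ⟨fun x y h' hL => ?_, hD⟩
      have heq' := (Affine.equation_iff (W := W.toAffine) x y).mp h'.1
      change y ^ 2 + W.a₁ * x * y + W.a₃ * y = x ^ 3 + W.a₂ * x ^ 2 + W.a₄ * x + W.a₆ at heq'
      have hX0 : X = x₀ := by
        injection hP
      have hyl : y = l * (x - x₀) + y₀ := by
        apply mul_left_cancel₀ hD
        linear_combination hL - (x - x₀) * hlD - 3 * heq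
      have hx : x = x₀ := by
        have : (x - x₀) ^ 3 = 0 := by
          rw [hX0] at hX
          subst hyl
          linear_combination -heq' + heq + (x - x₀) * hlD - (x - x₀) ^ 2 * hX
        exact sub_eq_zero.mp (pow_eq_zero_iff (by norm_num) |>.mp this)
      have hy0 : y = y₀ := by rw [hyl, hx]; ring
      subst hx hy0
      rfl
    · rintro ⟨hall, -⟩
      apply hall
      rw [hY]
      linear_combination (X - x₀) * hlD + 3 * heq
end

section
/- Let K be an algebraically closed field with a nontrivial non-archimedean valuation v: K* → ℝ, valuation ring R, and residue field k of characteristic different from 2 and 3. Let W be an integral Weierstrass model of an elliptic curve E over K. Then W is a minimal integral Weierstrass model of E if and only if min{v(c₄), v(c₆)} = 0. -/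
open WeierstrassCurve

/-- The valuation ring of `v`, as a subring. -/
def valR {K : Type*} [Field K] (v : AddValuation K (WithTop ℝ)) : Subring K where
  carrier := {x | 0 ≤ v x}
  mul_mem' := by
    intro a b ha hb
    simp only [Set.mem_setOf_eq] at *
    rw [v.map_mul]
    exact add_nonneg ha hb
  one_mem' := by simp [v.map_one]
  add_mem' := by
    intro a b ha hb
    exact v.map_le_add ha hb
  zero_mem' := by simp [v.map_zero]
  neg_mem' := by
    intro a ha
    simpa [v.map_neg] using ha

lemma mem_valR {K : Type*} [Field K] (v : AddValuation K (WithTop ℝ)) (x : K) :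
    x ∈ valR v ↔ 0 ≤ v x := Iff.rfl

lemma c_mem_valR {K : Type*} [Field K] (v : AddValuation K (WithTop ℝ))
    (W : WeierstrassCurve K) (h : IsIntegralModel v W) :
    0 ≤ v W.c₄ ∧ 0 ≤ v W.c₆ := by
  obtain ⟨h1, h2, h3, h4, h6⟩ := h
  simp only [← mem_valR] at *
  have n : ∀ m : ℕ, (m : K) ∈ valR v := fun m => natCast_mem _ m
  have b2 : W.b₂ ∈ valR v := add_mem (pow_mem h1 2) (mul_mem (n 4) h2)
  have b4 : W.b₄ ∈ valR v := add_mem (mul_mem (n 2) h4) (mul_mem h1 h3)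
  have b6 : W.b₆ ∈ valR v := add_mem (pow_mem h3 2) (mul_mem (n 4) h6)
  exact ⟨sub_mem (pow_mem b2 2) (mul_mem (n 24) b4),
    sub_mem (add_mem (neg_mem (pow_mem b2 3)) (mul_mem (mul_mem (n 36) b2) b4))
      (mul_mem (n 216) b6)⟩

lemma v_inv_add {K : Type*} [Field K] (v : AddValuation K (WithTop ℝ)) {u : K} (hu : u ≠ 0) :
    v u⁻¹ + v u = 0 := by
  rw [← v.map_mul, inv_mul_cancel₀ hu, v.map_one]

lemma v_inv_mul_nonneg {K : Type*} [Field K] (v : AddValuation K (WithTop ℝ)) {u a : K}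
    (hu : u ≠ 0) (h : v u ≤ v a) : 0 ≤ v (u⁻¹ * a) := by
  rw [v.map_mul, ← v_inv_add v hu]
  gcongr

lemma v_pow_pos {K : Type*} [Field K] (v : AddValuation K (WithTop ℝ)) {u : K} {n : ℕ}
    (h : 0 < v (u ^ n)) : 0 < v u := by
  by_contra hn
  rw [v.map_pow] at h
  exact absurd h (not_lt.mpr (nsmul_nonpos (not_lt.mp hn) n))

/-- Scaling by an element of positive valuation to an integral model contradicts minimality. -/
lemma reduce {K : Type*} [Field K] (v : AddValuation K (WithTop ℝ))
    (hv2 : v (2 : K) = 0) (hv3 : v (3 : K) = 0) (W : WeierstrassCurve K) (u : K) (hu : u ≠ 0)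
    (h4 : 0 ≤ v (u⁻¹ ^ 4 * W.c₄)) (h6 : 0 ≤ v (u⁻¹ ^ 6 * W.c₆)) :
    ∃ C : VariableChange K, (C.u : K) = u ∧ IsIntegralModel v (C • W) := by
  have n2 : (2 : K) ≠ 0 := by rintro h; simp [h] at hv2
  have n3 : (3 : K) ≠ 0 := by rintro h; simp [h] at hv3
  have i2 : (2 : K)⁻¹ ∈ valR v := by
    have := v_inv_add v n2
    rw [hv2, add_zero] at this
    exact this.ge
  have i3 : (3 : K)⁻¹ ∈ valR v := by
    have := v_inv_add v n3
    rw [hv3, add_zero] at this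
    exact this.ge
  have n12 : (12 : K) ≠ 0 := by
    have : (12 : K) = 2 ^ 2 * 3 := by norm_num
    rw [this]; positivity
  let C : VariableChange K := ⟨Units.mk0 u hu, -W.b₂ / 12, -W.a₁ / 2,
    -(W.a₃ + (-W.b₂ / 12) * W.a₁) / 2⟩
  have e1 : (C • W).a₁ = 0 := by
    rw [variableChange_a₁]; simp only [C]; field_simp; ring
  have e2 : (C • W).a₂ = 0 := by
    have : (C • W).b₂ = 0 := by
      rw [variableChange_b₂]; simp only [C]; field_simp; ring
    rw [b₂, e1] at this
    have h4 : (4 : K) ≠ 0 := by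
      have : (4 : K) = 2 ^ 2 := by norm_num
      rw [this]; positivity
    simpa [h4] using this
  have e3 : (C • W).a₃ = 0 := by
    rw [variableChange_a₃]; simp only [C]; field_simp; ring
  have f4 : (C • W).c₄ = -(2 ^ 4 * 3) * (C • W).a₄ := by
    rw [c₄, b₂, b₄, e1, e2, e3]; ring
  have f6 : (C • W).c₆ = -(2 ^ 5 * 3 ^ 3) * (C • W).a₆ := by
    rw [c₆, b₂, b₄, b₆, e1, e2, e3]; ring
  have g4 : (C • W).a₄ = -((2⁻¹) ^ 4 * 3⁻¹) * (C • W).c₄ := by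
    rw [f4]; field_simp
  have g6 : (C • W).a₆ = -((2⁻¹) ^ 5 * 3⁻¹ ^ 3) * (C • W).c₆ := by
    rw [f6]; field_simp
  have k4 : (C • W).c₄ ∈ valR v := by
    rw [variableChange_c₄]; simpa [C, mem_valR] using h4
  have k6 : (C • W).c₆ ∈ valR v := by
    rw [variableChange_c₆]; simpa [C, mem_valR] using h6
  refine ⟨C, rfl, ?_, ?_, ?_, ?_, ?_⟩
  · simp [e1]
  · simp [e2]
  · simp [e3]
  · rw [g4]
    exact mul_mem (neg_mem (mul_mem (pow_mem i2 4) i3)) k4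
  · rw [g6]
    exact mul_mem (neg_mem (mul_mem (pow_mem i2 5) (pow_mem i3 3))) k6

/-- criterion for minimality. Let `K` be an algebraically closed field with a
nontrivial non-archimedean valuation `v` whose residue field has characteristic ≠ 2, 3 (encoded
by `v 2 = 0` and `v 3 = 0`).  Let `W` be an integral Weierstrass model of an elliptic curve
`E` over `K`.  Then `W` is a minimal integral Weierstrass model of `E` if and only if
`min (v c₄) (v c₆) = 0`. -/
theorem statement9 {K : Type*} [Field K] [IsAlgClosed K] (v : AddValuation K (WithTop ℝ))
    (hv : ∃ x : K, x ≠ 0 ∧ v x ≠ 0) (hv2 : v (2 : K) = 0) (hv3 : v (3 : K) = 0)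
    (E W : WeierstrassCurve K) (hΔ : E.Δ ≠ 0)
    (hmod : IsModelOf E W) (hint : IsIntegralModel v W) :
    IsMinimalModel v E W ↔ min (v W.c₄) (v W.c₆) = 0 := by
  have n2 : (2 : K) ≠ 0 := by rintro h; simp [h] at hv2
  have n3 : (3 : K) ≠ 0 := by rintro h; simp [h] at hv3
  obtain ⟨c4, c6⟩ := c_mem_valR v W hint
  have hWΔ : W.Δ ≠ 0 := by
    obtain ⟨C, rfl⟩ := hmod
    rw [variableChange_Δ]
    exact mul_ne_zero (pow_ne_zero _ (Units.ne_zero _)) hΔ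
  constructor
  · rintro ⟨-, -, hmin⟩
    by_contra hne
    have hpos : 0 < min (v W.c₄) (v W.c₆) := lt_of_le_of_ne (le_min c4 c6) (Ne.symm hne)
    obtain ⟨p4, p6⟩ := lt_min_iff.mp hpos
    obtain ⟨a, ha⟩ := IsAlgClosed.exists_pow_nat_eq W.c₄ (n := 4) (by norm_num)
    obtain ⟨b, hb⟩ := IsAlgClosed.exists_pow_nat_eq W.c₆ (n := 6) (by norm_num)
    rw [← ha] at p4
    rw [← hb] at p6
    have pa := v_pow_pos v p4
    have pb := v_pow_pos v p6
    have hab : ¬ (a = 0 ∧ b = 0) := by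
      rintro ⟨rfl, rfl⟩
      have := W.c_relation
      rw [← ha, ← hb] at this
      have h : (2 ^ 6 * 3 ^ 3 : K) * W.Δ = 0 := by linear_combination this
      exact mul_ne_zero (mul_ne_zero (pow_ne_zero _ n2) (pow_ne_zero _ n3)) hWΔ h
    obtain ⟨u, hu, pu, hua, hub⟩ : ∃ u : K, u ≠ 0 ∧ 0 < v u ∧ v u ≤ v a ∧ v u ≤ v b := by
      rcases le_total (v a) (v b) with h | h
      · refine ⟨a, ?_, pa, le_rfl, h⟩
        rintro rfl
        rw [v.map_zero, top_le_iff, v.top_iff] at h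
        exact hab ⟨rfl, h⟩
      · refine ⟨b, ?_, pb, h, le_rfl⟩
        rintro rfl
        rw [v.map_zero, top_le_iff, v.top_iff] at h
        exact hab ⟨h, rfl⟩
    obtain ⟨C, hC, hI⟩ := reduce v hv2 hv3 W u hu
      (by
        rw [← ha, ← mul_pow]
        exact pow_mem (S := valR v) (v_inv_mul_nonneg v hu hua) 4)
      (by
        rw [← hb, ← mul_pow]
        exact pow_mem (S := valR v) (v_inv_mul_nonneg v hu hub) 6)
    have hm : IsModelOf E (C • W) := by
      obtain ⟨D, rfl⟩ := hmod
      exact ⟨C * D, by rw [mul_smul]⟩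
    have key := hmin _ hm hI
    have hd : W.Δ = u ^ 12 * (C • W).Δ := by
      rw [variableChange_Δ, Units.val_inv_eq_inv_val, hC]; field_simp
    have hd' : (C • W).Δ ≠ 0 := by
      intro h; rw [h, mul_zero] at hd; exact hWΔ hd
    rw [hd, v.map_mul, v.map_pow] at key
    have t1 : v u ≠ ⊤ := fun h => hu ((v.top_iff).mp h)
    have t2 : v (C • W).Δ ≠ ⊤ := fun h => hd' ((v.top_iff).mp h)
    lift v u to ℝ using t1 with x
    lift v (C • W).Δ to ℝ using t2 with y
    norm_cast at key pu
    simp only [nsmul_eq_mul] at key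
    push_cast at key
    linarith
  · intro h0
    refine ⟨hmod, hint, ?_⟩
    rintro W' ⟨D, rfl⟩ hI
    obtain ⟨C, hC⟩ : ∃ C : VariableChange K, D • E = C • W := by
      obtain ⟨F, rfl⟩ := hmod
      exact ⟨D * F⁻¹, by rw [← mul_smul, inv_mul_cancel_right]⟩
    rw [hC] at hI ⊢
    obtain ⟨d4, d6⟩ := c_mem_valR v _ hI
    rw [variableChange_c₄, v.map_mul] at d4
    rw [variableChange_c₆, v.map_mul] at d6
    have hw : 0 ≤ v ((C.u⁻¹ : Kˣ) : K) := by
      by_contra hn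
      have hneg : ∀ n : ℕ, n ≠ 0 → v (((C.u⁻¹ : Kˣ) : K) ^ n) < 0 := by
        intro n hn0
        rw [v.map_pow]
        have t1 : v ((C.u⁻¹ : Kˣ) : K) ≠ ⊤ := fun h => Units.ne_zero _ ((v.top_iff).mp h)
        rw [not_le] at hn
        lift v ((C.u⁻¹ : Kˣ) : K) to ℝ using t1 with x
        norm_cast at hn ⊢
        rw [nsmul_eq_mul]
        exact mul_neg_of_pos_of_neg (by positivity) hn
      rcases min_choice (v W.c₄) (v W.c₆) with h | h
      · rw [h] at h0
        rw [h0, add_zero] at d4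
        exact absurd d4 (not_le.mpr (hneg 4 (by norm_num)))
      · rw [h] at h0
        rw [h0, add_zero] at d6
        exact absurd d6 (not_le.mpr (hneg 6 (by norm_num)))
    rw [variableChange_Δ, v.map_mul]
    exact le_add_of_nonneg_left (pow_mem (S := valR v) hw 12)
end

section
/- Let K be an algebraically closed field with a nontrivial non-archimedean valuation v: K* → ℝ, valuation ring R, and residue field k of characteristic different from 2 and 3. If W and W' are two minimal integral Weierstrass models of the same elliptic curve E over K, related by an admissible change of variables x = u²x' + r, y = u³y' + u²sx' + t, then v(u) = 0 (i.e. u ∈ R*) and r, s, t ∈ R. -/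
open WeierstrassCurve

/-- uniqueness of minimal models. If `W` and `W'` are two minimal integral
Weierstrass models of the same elliptic curve `E` over `K`, related by an admissible change of
variables `C = (u, r, s, t)`, then `v u = 0` (i.e. `u ∈ Rˣ`) and `r, s, t ∈ R`. -/
theorem statement11 {K : Type*} [Field K] [IsAlgClosed K] (v : AddValuation K (WithTop ℝ))
    (hv : ∃ x : K, x ≠ 0 ∧ v x ≠ 0) (hv2 : v (2 : K) = 0) (hv3 : v (3 : K) = 0)
    (E W W' : WeierstrassCurve K) (hΔ : E.Δ ≠ 0)
    (hW : IsMinimalModel v E W) (hW' : IsMinimalModel v E W')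
    (C : VariableChange K) (hC : W' = C • W) :
    v (C.u : K) = 0 ∧ 0 ≤ v C.r ∧ 0 ≤ v C.s ∧ 0 ≤ v C.t := by
  obtain ⟨⟨D, hD⟩, ⟨h1, h2, h3, h4, h6⟩, hmin⟩ := hW
  obtain ⟨hm', ⟨h1', h2', h3', h4', h6'⟩, hmin'⟩ := hW'
  have hE : v W.Δ = v W'.Δ :=
    le_antisymm (hmin W' hm' ⟨h1', h2', h3', h4', h6'⟩)
      (hmin' W ⟨D, hD⟩ ⟨h1, h2, h3, h4, h6⟩)
  have hu0 : (C.u : K) ≠ 0 := C.u.ne_zero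
  have hW0 : W.Δ ≠ 0 := by
    rw [hD, variableChange_Δ]
    exact mul_ne_zero (pow_ne_zero _ (Units.ne_zero _)) hΔ
  have hd : W.Δ = (C.u : K) ^ 12 * W'.Δ := by
    rw [hC, variableChange_Δ, ← mul_assoc, ← mul_pow, C.u.mul_inv, one_pow, one_mul]
  have hu : v (C.u : K) = 0 := by
    have h := congrArg v hd
    rw [v.map_mul, v.map_pow, ← hE] at h
    have n1 : v W.Δ ≠ ⊤ := fun h => hW0 (v.top_iff.1 h)
    have n2 : v (C.u : K) ≠ ⊤ := fun h => hu0 (v.top_iff.1 h)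
    generalize v W.Δ = a at *
    generalize v (C.u : K) = b at *
    lift a to ℝ using n1
    lift b to ℝ using n2
    have h' : a = 12 • b + a := by exact_mod_cast h
    have : b = 0 := by
      rw [nsmul_eq_mul] at h'
      push_cast at h'
      linarith
    exact_mod_cast this
  have mul : ∀ {x y : K}, 0 ≤ v x → 0 ≤ v y → 0 ≤ v (x * y) := fun hx hy => by
    rw [v.map_mul]; exact add_nonneg hx hy
  have e1 : 2 * C.s = C.u * W'.a₁ - W.a₁ := by
    rw [hC, variableChange_a₁, ← mul_assoc, C.u.mul_inv]; ring
  have e2 : 3 * C.r = C.u ^ 2 * W'.a₂ - W.a₂ + C.s * W.a₁ + C.s * C.s := by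
    rw [hC, variableChange_a₂, ← mul_assoc, ← mul_pow, C.u.mul_inv]; ring
  have e3 : 2 * C.t = C.u ^ 3 * W'.a₃ - W.a₃ - C.r * W.a₁ := by
    rw [hC, variableChange_a₃, ← mul_assoc, ← mul_pow, C.u.mul_inv]; ring
  have hun : ∀ n : ℕ, 0 ≤ v ((C.u : K) ^ n) := fun n => by rw [v.map_pow, hu, nsmul_zero]
  have hs : 0 ≤ v C.s := by
    have : 0 ≤ v (2 * C.s) := by
      rw [e1]; exact v.map_le_sub (mul hu.ge h1') h1
    rwa [v.map_mul, hv2, zero_add] at this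
  have hr : 0 ≤ v C.r := by
    have : 0 ≤ v (3 * C.r) := by
      rw [e2]
      exact v.map_le_add (v.map_le_add (v.map_le_sub (mul (hun 2) h2') h2) (mul hs h1)) (mul hs hs)
    rwa [v.map_mul, hv3, zero_add] at this
  have ht : 0 ≤ v C.t := by
    have : 0 ≤ v (2 * C.t) := by
      rw [e3]
      exact v.map_le_sub (v.map_le_sub (mul (hun 3) h3') h3) (mul hr h1)
    rwa [v.map_mul, hv2, zero_add] at this
  exact ⟨hu, hr, hs, ht⟩
end

section
/- Let K be an algebraically closed field with a nontrivial non-archimedean valuation v: K* → ℝ, valuation ring R, and residue field k of characteristic different from 2 and 3. Let W be an integral Weierstrass model of an elliptic curve E over K, and suppose an admissible change of variables x = u²x' + r, y = u³y' + u²sx' + t transforms W into a minimal integral Weierstrass model W' of E. Then u, r, s, t all lie in R. -/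
open WeierstrassCurve

/-- Let `W` be an integral Weierstrass model of an elliptic curve `E` over
`K`, and suppose an admissible change of variables `C = (u, r, s, t)` transforms `W` into a
minimal integral Weierstrass model of `E`.  Then `u, r, s, t` all lie in the valuation
ring `R`. -/
theorem statement12 {K : Type*} [Field K] [IsAlgClosed K] (v : AddValuation K (WithTop ℝ))
    (hv : ∃ x : K, x ≠ 0 ∧ v x ≠ 0) (hv2 : v (2 : K) = 0) (hv3 : v (3 : K) = 0)
    (E W : WeierstrassCurve K) (hΔ : E.Δ ≠ 0)
    (hmod : IsModelOf E W) (hint : IsIntegralModel v W)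
    (C : VariableChange K) (hmin : IsMinimalModel v E (C • W)) :
    0 ≤ v (C.u : K) ∧ 0 ≤ v C.r ∧ 0 ≤ v C.s ∧ 0 ≤ v C.t := by
  obtain ⟨h1, h2, h3, h4, h6⟩ := hint
  obtain ⟨-, ⟨g1, g2, g3, -, -⟩, hm⟩ := hmin
  have hadd : ∀ x y : K, 0 ≤ v x → 0 ≤ v y → 0 ≤ v (x + y) := fun x y hx hy =>
    le_trans (le_min hx hy) (v.map_add x y)
  have hsub : ∀ x y : K, 0 ≤ v x → 0 ≤ v y → 0 ≤ v (x - y) := fun x y hx hy =>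
    le_trans (le_min hx hy) (v.map_sub x y)
  have hmul : ∀ x y : K, 0 ≤ v x → 0 ≤ v y → 0 ≤ v (x * y) := fun x y hx hy => by
    rw [v.map_mul]; exact add_nonneg hx hy
  have hu0 : (C.u : K) ≠ 0 := C.u.ne_zero
  have hW : W.Δ ≠ 0 := by
    obtain ⟨D, rfl⟩ := hmod
    rw [variableChange_Δ]
    exact mul_ne_zero (pow_ne_zero _ D.u⁻¹.ne_zero) hΔ
  have hD : (C • W).Δ ≠ 0 := by
    rw [variableChange_Δ]
    exact mul_ne_zero (pow_ne_zero _ C.u⁻¹.ne_zero) hW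
  have hle := hm W hmod ⟨h1, h2, h3, h4, h6⟩
  have hΔeq : W.Δ = (C.u : K) ^ 12 * (C • W).Δ := by
    rw [variableChange_Δ, ← mul_assoc, ← mul_pow, C.u.mul_inv, one_pow, one_mul]
  have hu : 0 ≤ v (C.u : K) := by
    rw [hΔeq, v.map_mul, v.map_pow] at hle
    have h1 : v (C • W).Δ ≠ ⊤ := fun h => hD (v.top_iff.1 h)
    have h2 : v (C.u : K) ≠ ⊤ := fun h => hu0 (v.top_iff.1 h)
    generalize v (C • W).Δ = d at *
    generalize v (C.u : K) = a at *
    lift d to ℝ using h1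
    lift a to ℝ using h2
    norm_cast at hle ⊢
    rw [nsmul_eq_mul] at hle
    push_cast at hle
    linarith
  have hs : 0 ≤ v C.s := by
    have e : 2 * C.s = C.u * (C • W).a₁ - W.a₁ := by
      rw [variableChange_a₁, ← mul_assoc, C.u.mul_inv]; ring
    have := hsub _ _ (hmul _ _ hu g1) h1
    rwa [← e, v.map_mul, hv2, zero_add] at this
  have hr : 0 ≤ v C.r := by
    have e : 3 * C.r = C.u * (C.u * (C • W).a₂) - W.a₂ + C.s * W.a₁ + C.s * C.s := by
      rw [variableChange_a₂]
      linear_combination (-(C.u * C.u⁻¹ + 1) * (W.a₂ - C.s * W.a₁ + 3 * C.r - C.s ^ 2) : K)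
        * C.u.mul_inv
    have := hadd _ _ (hadd _ _ (hsub _ _ (hmul _ _ hu (hmul _ _ hu g2)) h2)
      (hmul _ _ hs h1)) (hmul _ _ hs hs)
    rwa [← e, v.map_mul, hv3, zero_add] at this
  have ht : 0 ≤ v C.t := by
    have e : 2 * C.t = C.u * (C.u * (C.u * (C • W).a₃)) - W.a₃ - C.r * W.a₁ := by
      rw [variableChange_a₃]
      linear_combination (-((C.u * C.u⁻¹) ^ 2 + C.u * C.u⁻¹ + 1)
        * (W.a₃ + C.r * W.a₁ + 2 * C.t) : K) * C.u.mul_inv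
    have := hsub _ _ (hsub _ _ (hmul _ _ hu (hmul _ _ hu (hmul _ _ hu g3))) h3) (hmul _ _ hr h1)
    rwa [← e, v.map_mul, hv2, zero_add] at this
  exact ⟨hu, hr, hs, ht⟩
end

section
/- Let K be an algebraically closed field with a nontrivial non-archimedean valuation v: K* → ℝ and residue field k of characteristic different from 2 and 3. Let W be an integral Weierstrass model of an elliptic curve E over K with min{v(c₄), v(c₆)} = 0 (i.e. W is minimal). Then v(Δ) = 0 if and only if v(j) ≥ 0, where j = c₄³/Δ is the j-invariant; that is, E has good reduction if and only if v(j(E)) ≥ 0. -/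
open WeierstrassCurve

/-- good reduction and the j-invariant. Let `W` be a minimal integral
Weierstrass model (i.e. `min (v c₄) (v c₆) = 0`) of an elliptic curve `E` over `K`.  Then
`v Δ = 0` if and only if `v j ≥ 0`, where `j = c₄³/Δ`; that is, `E` has good reduction if
and only if `v (j E) ≥ 0`. -/
theorem statement15 {K : Type*} [Field K] [IsAlgClosed K] (v : AddValuation K (WithTop ℝ))
    (hv : ∃ x : K, x ≠ 0 ∧ v x ≠ 0) (hv2 : v (2 : K) = 0) (hv3 : v (3 : K) = 0)
    (W : WeierstrassCurve K) (hΔ : W.Δ ≠ 0)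
    (hint : IsIntegralModel v W) (hmin : min (v W.c₄) (v W.c₆) = 0) :
    v W.Δ = 0 ↔ 0 ≤ v (W.c₄ ^ 3 / W.Δ) := by
  have hrel : 1728 * W.Δ = W.c₄ ^ 3 - W.c₆ ^ 2 := W.c_relation
  have h1728 : v (1728 : K) = 0 := by
    have : (1728 : K) = 2 ^ 6 * 3 ^ 3 := by norm_num
    rw [this, v.map_mul, v.map_pow, v.map_pow, hv2, hv3]; simp
  have hD : v (1728 * W.Δ) = v W.Δ := by rw [v.map_mul, h1728, zero_add]
  have hj : v (W.c₄ ^ 3) = v (W.c₄ ^ 3 / W.Δ) + v W.Δ := by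
    rw [← v.map_mul, div_mul_cancel₀ _ hΔ]
  have h4 : 0 ≤ v W.c₄ := hmin ▸ min_le_left _ _
  have h6 : 0 ≤ v W.c₆ := hmin ▸ min_le_right _ _
  have h43 : 0 ≤ v (W.c₄ ^ 3) := by rw [v.map_pow]; exact nsmul_nonneg h4 3
  have h62 : 0 ≤ v (W.c₆ ^ 2) := by rw [v.map_pow]; exact nsmul_nonneg h6 2
  have hΔ0 : 0 ≤ v W.Δ := by
    rw [← hD, hrel]
    exact v.map_le_sub h43 h62
  constructor
  · intro h
    rw [h, add_zero] at hj
    exact hj ▸ h43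
  · intro h
    by_contra hne
    have hpos : 0 < v W.Δ := lt_of_le_of_ne hΔ0 (Ne.symm hne)
    have h4p : 0 < v (W.c₄ ^ 3) := by
      rw [hj]
      exact lt_of_lt_of_le hpos (le_add_of_nonneg_left h)
    have h6p : 0 < v (W.c₆ ^ 2) := by
      have : W.c₆ ^ 2 = W.c₄ ^ 3 - 1728 * W.Δ := by rw [hrel]; ring
      rw [this]
      exact lt_of_lt_of_le (lt_min h4p (hD ▸ hpos)) (v.map_sub _ _)
    rcases min_choice (v W.c₄) (v W.c₆) with e | e
    · rw [e] at hmin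
      rw [v.map_pow, hmin] at h4p
      simp at h4p
    · rw [e] at hmin
      rw [v.map_pow, hmin] at h6p
      simp at h6p
end

section
/- Let K be an algebraically closed field with a nontrivial non-archimedean valuation v: K* → ℝ and residue field k of characteristic different from 2 and 3. Let W be an integral Weierstrass model of an elliptic curve E over K with min{v(c₄), v(c₆)} = 0 (i.e. W is minimal). Then v(j) < 0 if and only if v(Δ) > 0, and in that case necessarily v(c₄) = 0. In other words, E has multiplicative reduction if and only if v(j(E)) < 0, and E can never have additive reduction (the case v(Δ) > 0 and v(c₄) > 0 is impossible). -/
open WeierstrassCurve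

/-- multiplicative reduction and the j-invariant. Let `W` be a minimal
integral Weierstrass model (i.e. `min (v c₄) (v c₆) = 0`) of an elliptic curve `E` over `K`.
Then `v j < 0` if and only if `v Δ > 0`, and in that case necessarily `v c₄ = 0`; i.e. `E`
has multiplicative reduction iff `v (j E) < 0`, and `E` can never have additive reduction
(`v Δ > 0` together with `v c₄ > 0` is impossible). -/
theorem statement16 {K : Type*} [Field K] [IsAlgClosed K] (v : AddValuation K (WithTop ℝ))
    (hv : ∃ x : K, x ≠ 0 ∧ v x ≠ 0) (hv2 : v (2 : K) = 0) (hv3 : v (3 : K) = 0)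
    (W : WeierstrassCurve K) (hΔ : W.Δ ≠ 0)
    (hint : IsIntegralModel v W) (hmin : min (v W.c₄) (v W.c₆) = 0) :
    (v (W.c₄ ^ 3 / W.Δ) < 0 ↔ 0 < v W.Δ) ∧
    (v (W.c₄ ^ 3 / W.Δ) < 0 → v W.c₄ = 0) ∧
    ¬(0 < v W.Δ ∧ 0 < v W.c₄) := by
  have h4 : 0 ≤ v W.c₄ := hmin ▸ min_le_left _ _
  have h6 : 0 ≤ v W.c₆ := hmin ▸ min_le_right _ _
  have h1728 : v (1728 : K) = 0 := by
    have : (1728 : K) = 2 ^ 6 * 3 ^ 3 := by norm_num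
    rw [this, AddValuation.map_mul, AddValuation.map_pow, AddValuation.map_pow, hv2, hv3]
    simp
  have hD : v W.Δ = v (W.c₄ ^ 3 - W.c₆ ^ 2) := by
    rw [← W.c_relation, AddValuation.map_mul, h1728, zero_add]
  have hD0 : 0 ≤ v W.Δ := by
    rw [hD]
    apply AddValuation.map_le_sub
    · rw [AddValuation.map_pow]; exact nsmul_nonneg h4 _
    · rw [AddValuation.map_pow]; exact nsmul_nonneg h6 _
  have key : ¬(0 < v W.Δ ∧ 0 < v W.c₄) := by
    rintro ⟨hd, hc⟩
    have h60 : v W.c₆ = 0 := by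
      rcases min_choice (v W.c₄) (v W.c₆) with h | h
      · rw [hmin] at h; exact absurd h hc.ne
      · rw [← h, hmin]
    have e6 : v (W.c₆ ^ 2) = 0 := by rw [AddValuation.map_pow, h60]; simp
    have e4 : 0 < v (W.c₄ ^ 3) := by
      rw [AddValuation.map_pow]
      have : v W.c₄ ≤ 3 • v W.c₄ := le_self_nsmul h4 (by norm_num)
      exact lt_of_lt_of_le hc this
    have := AddValuation.map_sub_eq_of_lt_right v (x := W.c₄ ^ 3) (y := W.c₆ ^ 2) (by rwa [e6])
    rw [hD, this, e6] at hd
    exact lt_irrefl _ hd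
  have hc0 : 0 < v W.Δ → v W.c₄ = 0 := fun hd =>
    le_antisymm (not_lt.mp fun hc => key ⟨hd, hc⟩) h4
  have hq : v (W.c₄ ^ 3 / W.Δ) + v W.Δ = 3 • v W.c₄ := by
    rw [← AddValuation.map_mul, div_mul_cancel₀ _ hΔ, AddValuation.map_pow]
  have hiff : v (W.c₄ ^ 3 / W.Δ) < 0 ↔ 0 < v W.Δ := by
    constructor
    · intro hj
      refine lt_of_le_of_ne hD0 fun h => ?_
      rw [← h, add_zero] at hq
      rw [hq] at hj
      exact absurd hj (not_lt.mpr (nsmul_nonneg h4 _))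
    · intro hd
      rw [hc0 hd, smul_zero] at hq
      by_contra hj
      have := add_le_add (not_lt.mp hj) le_rfl (c := v W.Δ)
      rw [hq, zero_add] at this
      exact absurd hd (not_lt.mpr this)
  exact ⟨hiff, fun h => hc0 (hiff.mp h), key⟩
end

section
/- Let K be an algebraically closed field with a nontrivial non-archimedean valuation v: K* → ℝ, valuation ring R, and residue field k. Let E be an elliptic curve over K given by an integral Weierstrass model, and let n be a positive integer not divisible by the characteristic of k. If P = (x, y) ∈ E(K) is an affine point with n·P = O, then v(x) ≥ 0 and v(y) ≥ 0; equivalently, the kernel E₁(K) of the reduction map (the points reducing to the point at infinity) contains no nontrivial n-torsion: E₁(K)[n] = 0. -/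
open WeierstrassCurve

theorem s17_chord {K : Type*} [Field K] (a1 a2 a3 a4 a6 z1 z2 w1 w2 l n A B z3 w3 : K)
    (h1 : w1 = l * z1 + n) (h2 : w2 = l * z2 + n)
    (hF : w1 = z1 ^ 3 + a1 * z1 * w1 + a2 * z1 ^ 2 * w1 + a3 * w1 ^ 2 + a4 * z1 * w1 ^ 2
      + a6 * w1 ^ 3)
    (hN : z1 ^ 2 + z1 * z2 + z2 ^ 2 + a1 * w2 + a2 * (z1 + z2) * w2 + a4 * w2 ^ 2 =
      l * (1 - a1 * z1 - a2 * z1 ^ 2 - a3 * (w1 + w2) - a4 * z1 * (w1 + w2)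
        - a6 * (w1 ^ 2 + w1 * w2 + w2 ^ 2)))
    (hA : A = 1 + a2 * l + a4 * l ^ 2 + a6 * l ^ 3)
    (hB : B = a1 * l + a2 * n + a3 * l ^ 2 + 2 * a4 * l * n + 3 * a6 * l ^ 2 * n)
    (hA0 : A ≠ 0) (hn0 : n ≠ 0) (hw1 : w1 ≠ 0) (hw2 : w2 ≠ 0)
    (h3 : A * z3 = A * (-z1 - z2) - B) (hw3 : w3 = l * z3 + n) :
    w3 ≠ 0 ∧ (l / n) ^ 2 + a1 * (l / n) - a2 - z1 / w1 - z2 / w2 = z3 / w3 ∧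
      (l / n) * (z3 / w3 - z1 / w1) + (-1 / w1) = -1 / w3 := by
  obtain ⟨C, hC⟩ : ∃ C, C = a1 * n + 2 * a3 * l * n + a4 * n ^ 2 + 3 * a6 * l * n ^ 2 - l :=
    ⟨_, rfl⟩
  obtain ⟨D, hD⟩ : ∃ D, D = a3 * n ^ 2 + a6 * n ^ 3 - n := ⟨_, rfl⟩
  have f1 : A * z1 ^ 3 + B * z1 ^ 2 + C * z1 + D = 0 := by
    subst hA hB hC hD h1
    linear_combination -hF
  have g1 : A * (z1 ^ 2 + z1 * z2 + z2 ^ 2) + B * (z1 + z2) + C = 0 := by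
    subst hA hB hC hD h1 h2
    linear_combination hN
  have e2 : A * (z1 * z2 + z1 * z3 + z2 * z3) = C := by
    linear_combination (z1 + z2) * h3 - g1
  have e3 : A * (z1 * z2 * z3) = -D := by
    linear_combination z1 * z2 * h3 - z1 * g1 + f1
  have P : A * (w1 * w2 * w3) = n ^ 3 := by
    rw [h1, h2, hw3]
    have : A * (l * z1 + n) * (l * z2 + n) * (l * z3 + n) = n ^ 3 := by
      have : A * n ^ 3 - B * l * n ^ 2 + C * l ^ 2 * n - D * l ^ 3 = n ^ 3 := by
        subst hA hB hC hD; ring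
      linear_combination l ^ 3 * e3 + l ^ 2 * n * e2 + l * n ^ 2 * h3 + this
    linear_combination this
  have hw30 : w3 ≠ 0 := by
    rintro rfl
    apply pow_ne_zero 3 hn0
    rw [← P]; ring
  have S : A * (z1 * w2 * w3 + z2 * w1 * w3 + z3 * w1 * w2)
      = n * (l ^ 2 + a1 * l * n - a2 * n ^ 2) := by
    rw [h1, h2, hw3]
    have : 3 * l ^ 2 * (-D) + 2 * l * n * C - n ^ 2 * B
        = n * (l ^ 2 + a1 * l * n - a2 * n ^ 2) := by
      subst hB hC hD; ring
    linear_combination 3 * l ^ 2 * e3 + 2 * l * n * e2 + n ^ 2 * h3 + this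
  refine ⟨hw30, ?_, ?_⟩
  · have : (l / n) ^ 2 + a1 * (l / n) - a2 = z1 / w1 + z2 / w2 + z3 / w3 := by
      have t : z1 / w1 + z2 / w2 + z3 / w3
          = A * (z1 * w2 * w3 + z2 * w1 * w3 + z3 * w1 * w2) / (A * (w1 * w2 * w3)) := by
        field_simp
      rw [t, P, S]
      field_simp
    linear_combination this
  · field_simp
    rw [h1, hw3]
    ring

/-- Abstract form of "`pi` is topologically nilpotent in `R`". -/
def S17Small {K : Type*} [Field K] (R : Subring K) (p : K) : Prop :=
  p ∈ R ∧ ∀ d ∈ R, 1 - p * d ≠ 0 ∧ (1 - p * d)⁻¹ ∈ R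

def S17Good {K : Type*} [Field K] (W : WeierstrassCurve K) (R : Subring K) (p : K)
    (P : W.toAffine.Point) (t : K) : Prop :=
  (P = 0 ∧ t = 0) ∨ ∃ (a o : K) (_ : a ∈ R) (_ : o ∈ R) (_ : p ^ 3 * o ≠ 0)
    (x y : K) (h : W.toAffine.Nonsingular x y),
    P = Affine.Point.some x y h ∧ x = (p * a) / (p ^ 3 * o) ∧ y = -1 / (p ^ 3 * o) ∧ t = p * a

theorem s17_eq {K : Type*} [Field K] {W : WeierstrassCurve K} {x y z w : K} (hw : w ≠ 0)
    (h : W.toAffine.Equation x y) (hx : x = z / w) (hy : y = -1 / w) :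
    w = z ^ 3 + W.a₁ * z * w + W.a₂ * z ^ 2 * w + W.a₃ * w ^ 2 + W.a₄ * z * w ^ 2
      + W.a₆ * w ^ 3 := by
  rw [Affine.equation_iff, hx, hy] at h
  field_simp at h
  linear_combination h

/-- negation step -/
theorem s17_neg {K : Type*} [Field K] (R : Subring K) (p a1 a3 a o : K) (hp : S17Small R p)
    (h1 : a1 ∈ R) (h3 : a3 ∈ R) (ha : a ∈ R) (ho : o ∈ R) (hw : p ^ 3 * o ≠ 0) :
    ∃ a' o' b : K, a' ∈ R ∧ o' ∈ R ∧ b ∈ R ∧ p ^ 3 * o' ≠ 0 ∧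
      (p * a) / (p ^ 3 * o) = (p * a') / (p ^ 3 * o') ∧
      -(-1 / (p ^ 3 * o)) - a1 * ((p * a) / (p ^ 3 * o)) - a3 = -1 / (p ^ 3 * o') ∧
      p * a' + p * a = p ^ 2 * b := by
  have hpR := hp.1
  have hd : a1 * a + a3 * p ^ 2 * o ∈ R := by
    apply_rules [add_mem, mul_mem, pow_mem]
  obtain ⟨hu, hui⟩ := hp.2 _ hd
  obtain ⟨i, hi⟩ : ∃ i, i = (1 - p * (a1 * a + a3 * p ^ 2 * o))⁻¹ := ⟨_, rfl⟩
  rw [← hi] at hui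
  have hi0 : i ≠ 0 := by rw [hi]; exact inv_ne_zero hu
  have hii : (1 - p * (a1 * a + a3 * p ^ 2 * o)) * i = 1 := by rw [hi]; exact mul_inv_cancel₀ hu
  have hp0 : p ≠ 0 := by rintro rfl; simp at hw
  have ho0 : o ≠ 0 := by rintro rfl; simp at hw
  refine ⟨-(a * i), -(o * i), -(a * i * (a1 * a + a3 * p ^ 2 * o)), ?_, ?_, ?_, ?_, ?_, ?_, ?_⟩
  · apply_rules [neg_mem, mul_mem]
  · apply_rules [neg_mem, mul_mem]
  · exact neg_mem (mul_mem (mul_mem ha hui) hd)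
  · simp [hp0, ho0, hi0]
  · field_simp
  · field_simp
    linear_combination hii
  · linear_combination (-p * a) * hii

open scoped Classical in
theorem s17_add {K : Type*} [Field K] (W : WeierstrassCurve K) (R : Subring K) (p : K)
    (hp : S17Small R p) (h1 : W.a₁ ∈ R) (h2 : W.a₂ ∈ R) (h3 : W.a₃ ∈ R) (h4 : W.a₄ ∈ R)
    (h6 : W.a₆ ∈ R) (P Q : W.toAffine.Point) (t s : K) (hP : S17Good W R p P t)
    (hQ : S17Good W R p Q s) :
    ∃ u b : K, S17Good W R p (P + Q) u ∧ b ∈ R ∧ u - t - s = p ^ 2 * b := by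
  have hpR := hp.1
  rcases hP with ⟨rfl, rfl⟩ | ⟨a, o, ha, ho, hw1, x1, y1, hh1, rfl, hx1, hy1, rfl⟩
  · exact ⟨s, 0, by rwa [zero_add], zero_mem _, by ring⟩
  rcases hQ with ⟨rfl, rfl⟩ | ⟨a', o', ha', ho', hw2, x2, y2, hh2, rfl, hx2, hy2, rfl⟩
  · exact ⟨p * a, 0, by rw [add_zero]; exact Or.inr ⟨a, o, ha, ho, hw1, x1, y1, hh1, rfl, hx1,
      hy1, rfl⟩, zero_mem _, by ring⟩
  have hp0 : p ≠ 0 := by rintro rfl; simp at hw1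
  by_cases hneg : x1 = x2 ∧ y1 = W.toAffine.negY x2 y2
  · rw [Affine.Point.add_of_Y_eq hneg.1 hneg.2]
    obtain ⟨a'', o'', b, ha'', ho'', hb, hw'', ex, ey, eb⟩ :=
      s17_neg R p W.a₁ W.a₃ a' o' hp h1 h3 ha' ho' hw2
    refine ⟨0, -b, Or.inl ⟨rfl, rfl⟩, neg_mem hb, ?_⟩
    have hy := hneg.2
    have hx := hneg.1
    rw [Affine.negY, hy2, hx2, ey, hy1] at hy
    rw [hx1, hx2, ex] at hx
    have hoo : p ^ 3 * o = p ^ 3 * o'' := by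
      rw [div_eq_div_iff hw1 hw''] at hy
      linear_combination hy
    rw [hoo] at hx
    have : p * a = p * a'' := by
      rwa [div_left_inj' hw''] at hx
    linear_combination -this - eb
  rw [Affine.Point.add_some hneg]
  have F1 := s17_eq hw1 hh1.1 hx1 hy1
  have F2 := s17_eq hw2 hh2.1 hx2 hy2
  -- slope
  have hd : W.a₁ * a + W.a₂ * p * a ^ 2 + W.a₃ * p ^ 2 * (o + o') + W.a₄ * p ^ 3 * a * (o + o')
      + W.a₆ * p ^ 5 * (o ^ 2 + o * o' + o' ^ 2) ∈ R := by
    apply_rules [add_mem, mul_mem, pow_mem]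
  obtain ⟨d, hd'⟩ : ∃ d, d = W.a₁ * a + W.a₂ * p * a ^ 2 + W.a₃ * p ^ 2 * (o + o')
      + W.a₄ * p ^ 3 * a * (o + o')
      + W.a₆ * p ^ 5 * (o ^ 2 + o * o' + o' ^ 2) := ⟨_, rfl⟩
  rw [← hd'] at hd
  obtain ⟨hD0, hDi⟩ := hp.2 d hd
  have hDeq : 1 - p * d = 1 - W.a₁ * (p * a) - W.a₂ * (p * a) ^ 2
      - W.a₃ * (p ^ 3 * o + p ^ 3 * o') - W.a₄ * (p * a) * (p ^ 3 * o + p ^ 3 * o')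
      - W.a₆ * ((p ^ 3 * o) ^ 2 + (p ^ 3 * o) * (p ^ 3 * o') + (p ^ 3 * o') ^ 2) := by
    rw [hd']; ring
  obtain ⟨m, hm⟩ : ∃ m, m = a ^ 2 + a * a' + a' ^ 2 + W.a₁ * p * o'
      + W.a₂ * p ^ 2 * (a + a') * o' + W.a₄ * p ^ 4 * o' ^ 2 := ⟨_, rfl⟩
  have hmR : m ∈ R := by rw [hm]; apply_rules [add_mem, mul_mem, pow_mem]
  obtain ⟨l', hl'⟩ : ∃ l', l' = m * (1 - p * d)⁻¹ := ⟨_, rfl⟩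
  have hl'R : l' ∈ R := by rw [hl']; exact mul_mem hmR hDi
  have hl'D : l' * (1 - p * d) = m := by rw [hl', inv_mul_cancel_right₀ hD0]
  obtain ⟨n', hn'⟩ : ∃ n', n' = o - l' * a := ⟨_, rfl⟩
  have hn'R : n' ∈ R := by rw [hn']; exact sub_mem ho (mul_mem hl'R ha)
  obtain ⟨l, hl⟩ : ∃ l, l = p ^ 2 * l' := ⟨_, rfl⟩
  obtain ⟨n, hn⟩ : ∃ n, n = p ^ 3 * n' := ⟨_, rfl⟩
  obtain ⟨z1, hz1⟩ : ∃ z1, z1 = p * a := ⟨_, rfl⟩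
  obtain ⟨z2, hz2⟩ : ∃ z2, z2 = p * a' := ⟨_, rfl⟩
  obtain ⟨w1, hw1'⟩ : ∃ w1, w1 = p ^ 3 * o := ⟨_, rfl⟩
  obtain ⟨w2, hw2'⟩ : ∃ w2, w2 = p ^ 3 * o' := ⟨_, rfl⟩
  have hlN : z1 ^ 2 + z1 * z2 + z2 ^ 2 + W.a₁ * w2 + W.a₂ * (z1 + z2) * w2 + W.a₄ * w2 ^ 2 =
      l * (1 - p * d) := by
    rw [hl, mul_assoc (p ^ 2) l', hl'D, hm, hz1, hz2, hw2']; ring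
  rw [← hz1, ← hw1', ← hw2'] at hDeq
  rw [← hz1, ← hw1'] at F1 hx1
  rw [← hz2, ← hw2'] at F2 hx2
  rw [← hw1'] at hw1 hy1
  rw [← hw2'] at hw2 hy2
  have hsub : w1 - w2 = l * (z1 - z2) := by
    apply mul_right_cancel₀ hD0
    have : (w1 - w2) * (1 - p * d) = (z1 - z2) * (l * (1 - p * d)) := by
      rw [← hlN, hDeq]
      linear_combination F1 - F2
    rw [this]; ring
  have L1 : w1 = l * z1 + n := by
    rw [hw1', hl, hz1, hn, hn']; ring
  have L2 : w2 = l * z2 + n := by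
    linear_combination L1 - hsub
  -- slope
  have key : n ≠ 0 ∧ W.toAffine.slope x1 x2 y1 y2 = l / n := by
    by_cases hx : x1 = x2
    · have hy : y1 ≠ W.toAffine.negY x2 y2 := fun h => hneg ⟨hx, h⟩
      have hyy : y1 = y2 := by
        exact Affine.Y_eq_of_Y_ne hh1.1 hh2.1 hx hy
      have hww : w1 = w2 := by
        rw [hy1, hy2] at hyy
        field_simp at hyy
        linear_combination hyy
      have hzz : z1 = z2 := by
        rw [hx1, hx2, hww] at hx
        rwa [div_left_inj' hw2] at hx
      rw [Affine.slope_of_Y_ne hx hy]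
      rw [← hx, ← hyy] at hy
      rw [Affine.negY] at hy ⊢
      have e : (1 - p * d) * n = w1 ^ 2 * (y1 - (-y1 - W.a₁ * x1 - W.a₃)) := by
        have e1 : (1 - p * d) * n = (1 - p * d) * w1 - l * (1 - p * d) * z1 := by
          linear_combination -(1 - p * d) * L1
        rw [e1, ← hlN, hDeq, ← hww, ← hzz, hx1, hy1]
        field_simp
        linear_combination 3 * F1
      have hne : y1 - (-y1 - W.a₁ * x1 - W.a₃) ≠ 0 := sub_ne_zero.mpr hy
      have hn0 : n ≠ 0 := by
        rintro h0
        rw [h0, mul_zero] at e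
        exact mul_ne_zero (pow_ne_zero 2 hw1) hne e.symm
      refine ⟨hn0, ?_⟩
      rw [div_eq_div_iff hne hn0]
      apply mul_left_cancel₀ hD0
      have e4 : (3 * x1 ^ 2 + 2 * W.a₂ * x1 + W.a₄ - W.a₁ * y1) * w1 ^ 2 = l * (1 - p * d) := by
        rw [← hlN, ← hww, ← hzz, hx1, hy1]
        field_simp
        ring
      linear_combination (3 * x1 ^ 2 + 2 * W.a₂ * x1 + W.a₄ - W.a₁ * y1) * e
        + (y1 - (-y1 - W.a₁ * x1 - W.a₃)) * e4
    · rw [Affine.slope_of_X_ne hx]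
      have c : z1 * w2 - z2 * w1 = n * (z1 - z2) := by rw [L1, L2]; ring
      have c0 : z1 * w2 - z2 * w1 ≠ 0 := by
        intro h0
        apply hx
        rw [hx1, hx2, div_eq_div_iff hw1 hw2]
        linear_combination h0
      rw [c] at c0
      have hn0 := left_ne_zero_of_mul c0
      refine ⟨hn0, ?_⟩
      rw [div_eq_div_iff (sub_ne_zero.mpr hx) hn0, hx1, hx2, hy1, hy2]
      field_simp
      linear_combination n * hsub - l * c
  obtain ⟨hn0, hsl⟩ := key
  -- third point
  obtain ⟨c, hc⟩ : ∃ c, c = -(W.a₂ * p * l' + W.a₄ * p ^ 3 * l' ^ 2 + W.a₆ * p ^ 5 * l' ^ 3) :=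
    ⟨_, rfl⟩
  have hcR : c ∈ R := by rw [hc]; apply_rules [neg_mem, add_mem, mul_mem, pow_mem]
  obtain ⟨hA0, hAi⟩ := hp.2 c hcR
  have hAeq : 1 - p * c = 1 + W.a₂ * l + W.a₄ * l ^ 2 + W.a₆ * l ^ 3 := by
    rw [hc, hl]; ring
  obtain ⟨B', hB'⟩ : ∃ B', B' = W.a₁ * l' + W.a₂ * p * n' + W.a₃ * p ^ 2 * l' ^ 2
      + (1 + 1) * W.a₄ * p ^ 3 * l' * n' + (1 + 1 + 1) * W.a₆ * p ^ 5 * l' ^ 2 * n' := ⟨_, rfl⟩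
  have hB'R : B' ∈ R := by
    rw [hB']; apply_rules [add_mem, mul_mem, pow_mem, one_mem]
  have hBeq : p ^ 2 * B' = W.a₁ * l + W.a₂ * n + W.a₃ * l ^ 2 + 2 * W.a₄ * l * n
      + 3 * W.a₆ * l ^ 2 * n := by
    rw [hB', hl, hn]; ring
  obtain ⟨q, hq⟩ : ∃ q, q = B' * (1 - p * c)⁻¹ := ⟨_, rfl⟩
  have hqR : q ∈ R := by rw [hq]; exact mul_mem hB'R hAi
  have hqA : q * (1 - p * c) = B' := by rw [hq, inv_mul_cancel_right₀ hA0]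
  obtain ⟨a3, ha3⟩ : ∃ a3, a3 = -a - a' - p * q := ⟨_, rfl⟩
  have ha3R : a3 ∈ R := by rw [ha3]; apply_rules [sub_mem, neg_mem, mul_mem]
  obtain ⟨o3, ho3⟩ : ∃ o3, o3 = l' * a3 + n' := ⟨_, rfl⟩
  have ho3R : o3 ∈ R := by rw [ho3]; apply_rules [add_mem, mul_mem]
  obtain ⟨hw3, hX, hY⟩ := s17_chord W.a₁ W.a₂ W.a₃ W.a₄ W.a₆ z1 z2 w1 w2 l n (1 - p * c)
    (p ^ 2 * B') (p * a3) (p ^ 3 * o3) L1 L2 F1 (by rw [hlN, hDeq]) hAeq hBeq hA0 hn0 hw1 hw2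
    (by rw [← hqA, ha3, hz1, hz2]; ring) (by rw [ho3, hl, hn]; ring)
  obtain ⟨a'', o'', b, ha'', ho'', hb, hw'', ex, ey, eb⟩ :=
      s17_neg R p W.a₁ W.a₃ a3 o3 hp h1 h3 ha3R ho3R hw3
  have EX : W.toAffine.addX x1 x2 (W.toAffine.slope x1 x2 y1 y2)
      = (p * a3) / (p ^ 3 * o3) := by
    rw [Affine.addX, hsl, hx1, hx2]; exact hX
  have EY : W.toAffine.addY x1 x2 y1 (W.toAffine.slope x1 x2 y1 y2)
      = -1 / (p ^ 3 * o'') := by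
    rw [Affine.addY, Affine.negAddY, EX, hsl, Affine.negY, hx1, hy1, hY]; exact ey
  refine ⟨p * a'', b + q, Or.inr ⟨a'', o'', ha'', ho'', hw'', _, _, _, rfl, ?_, EY, rfl⟩,
    add_mem hb hqR, ?_⟩
  · rw [EX, ex]
  · rw [ha3] at eb
    linear_combination eb

open scoped Classical in
theorem s17_nsmul {K : Type*} [Field K] (W : WeierstrassCurve K) (R : Subring K) (p : K)
    (hp : S17Small R p) (h1 : W.a₁ ∈ R) (h2 : W.a₂ ∈ R) (h3 : W.a₃ ∈ R) (h4 : W.a₄ ∈ R)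
    (h6 : W.a₆ ∈ R) (P : W.toAffine.Point) (hP : S17Good W R p P p) (n : ℕ) :
    ∃ u b : K, S17Good W R p (n • P) u ∧ b ∈ R ∧ u - n * p = p ^ 2 * b := by
  induction n with
  | zero => exact ⟨0, 0, Or.inl ⟨zero_smul _ _, rfl⟩, zero_mem _, by simp⟩
  | succ n ih =>
    obtain ⟨u, b, hu, hb, e⟩ := ih
    obtain ⟨u', b', hu', hb', e'⟩ := s17_add W R p hp h1 h2 h3 h4 h6 _ _ _ _ hu hP
    refine ⟨u', b + b', by rwa [succ_nsmul], add_mem hb hb', ?_⟩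
    push_cast
    linear_combination e + e'

/-- The valuation ring. -/
def s17R {K : Type*} [Field K] (v : AddValuation K (WithTop ℝ)) : Subring K where
  carrier := {x | 0 ≤ v x}
  mul_mem' {a b} ha hb := by
    simp only [Set.mem_ofPred_eq] at *
    rw [v.map_mul]; exact add_nonneg ha hb
  one_mem' := by simp
  add_mem' ha hb := v.map_le_add ha hb
  zero_mem' := by simp
  neg_mem' {a} ha := by
    simp only [Set.mem_ofPred_eq] at *
    rwa [v.map_neg]

theorem s17_mem {K : Type*} [Field K] (v : AddValuation K (WithTop ℝ)) (x : K) :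
    x ∈ s17R v ↔ 0 ≤ v x := Iff.rfl

theorem s17_inv {K : Type*} [Field K] (v : AddValuation K (WithTop ℝ)) (x : K)
    (hx : x ∉ s17R v) : 0 < v x⁻¹ := by
  rw [s17_mem, not_le] at hx
  have h0 : x ≠ 0 := by rintro rfl; simp at hx
  have h : v x + v x⁻¹ = 0 := by rw [← v.map_mul, mul_inv_cancel₀ h0, v.map_one]
  by_contra hc
  rw [not_lt] at hc
  have : v x + v x⁻¹ < 0 := add_neg_of_neg_of_nonpos hx hc
  exact absurd h this.ne

theorem s17_small {K : Type*} [Field K] (v : AddValuation K (WithTop ℝ)) (p : K)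
    (hp : 0 < v p) : S17Small (s17R v) p := by
  refine ⟨hp.le, fun d hd => ?_⟩
  have h1 : 0 < v (p * d) := by
    rw [v.map_mul]; exact add_pos_of_pos_of_nonneg hp hd
  have h2 : v (1 - p * d) = 0 := by
    rw [v.map_sub_eq_of_lt_left (by rwa [v.map_one]), v.map_one]
  have h3 : 1 - p * d ≠ 0 := by
    intro h; rw [h] at h2; simp at h2
  refine ⟨h3, ?_⟩
  by_contra hc
  have := s17_inv v _ hc
  rw [inv_inv, h2] at this
  exact lt_irrefl _ this

open scoped Classical in
/-- Let `K` be an algebraically closed field with a nontrivial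
non-archimedean valuation `v`, let `E` be an elliptic curve over `K` given by an integral
Weierstrass model, and let `n` be a positive integer not divisible by the residue
characteristic (encoded by `v n = 0`).  If `P = (x, y)` is an affine point of `E(K)` with
`n • P = 0`, then `v x ≥ 0` and `v y ≥ 0`; equivalently, the kernel `E₁(K)` of the
reduction map contains no nontrivial `n`-torsion. -/
theorem statement17 {K : Type*} [Field K] [IsAlgClosed K] (v : AddValuation K (WithTop ℝ))
    (hv : ∃ x : K, x ≠ 0 ∧ v x ≠ 0)
    (W : WeierstrassCurve K) (hΔ : W.Δ ≠ 0) (hint : IsIntegralModel v W)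
    (n : ℕ) (hn : 0 < n) (hvn : v (n : K) = 0)
    (x y : K) (h : W.toAffine.Nonsingular x y)
    (htor : n • (Affine.Point.some x y h) = 0) :
    0 ≤ v x ∧ 0 ≤ v y := by
  obtain ⟨i1, i2, i3, i4, i6⟩ := hint
  rw [← s17_mem] at i1 i2 i3 i4 i6
  have heq := (Affine.equation_iff _ _).1 h.1
  have hxR : x ∈ s17R v := by
    by_contra hx
    have hx0 : x ≠ 0 := by rintro rfl; exact hx (zero_mem _)
    have hxi := s17_inv v x hx
    have hxiR : x⁻¹ ∈ s17R v := hxi.le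
    have hyx : y / x ∉ s17R v := by
      intro hy
      apply hx
      have : x = (y / x) ^ 2 + W.a₁ * (y / x) + W.a₃ * (y / x) * x⁻¹ - W.a₂ - W.a₄ * x⁻¹
          - W.a₆ * x⁻¹ ^ 2 := by
        field_simp
        linear_combination -heq
      rw [this]
      apply_rules [sub_mem, add_mem, mul_mem, pow_mem]
    have hy0 : y ≠ 0 := by rintro rfl; apply hyx; simp
    obtain ⟨p, hp⟩ : ∃ p, p = -(y / x)⁻¹ := ⟨_, rfl⟩
    have hvp : 0 < v p := by rw [hp, v.map_neg]; exact s17_inv v _ hyx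
    have hs := s17_small v p hvp
    have hpR := hs.1
    have hp0 : p ≠ 0 := by rw [hp]; simp [hx0, hy0]
    obtain ⟨e, he⟩ : ∃ e, e = W.a₁ + W.a₂ * p + W.a₃ * x⁻¹ + W.a₄ * p * x⁻¹
      + W.a₆ * p * x⁻¹ ^ 2 := ⟨_, rfl⟩
    have heR : e ∈ s17R v := by rw [he]; apply_rules [add_mem, mul_mem, pow_mem]
    obtain ⟨hu, hui⟩ := hs.2 e heR
    have hy' : y = -x / p := by rw [hp]; field_simp
    have hw : p * x⁻¹ * (1 - p * e) = p ^ 3 := by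
      rw [hy'] at heq
      rw [he]
      field_simp at heq ⊢
      linear_combination heq
    have hw' : p ^ 3 * (1 - p * e)⁻¹ = p * x⁻¹ := by
      rw [← hw, mul_inv_cancel_right₀ hu]
    have hgood : S17Good W (s17R v) p (Affine.Point.some x y h) p := by
      refine Or.inr ⟨1, (1 - p * e)⁻¹, one_mem _, hui, ?_, x, y, h, rfl, ?_, ?_, by ring⟩
      · exact mul_ne_zero (pow_ne_zero 3 hp0) (inv_ne_zero hu)
      · rw [hw']; field_simp
      · rw [hw', hy']; field_simp
    obtain ⟨u, b, hub, hb, e1⟩ := s17_nsmul W (s17R v) p hs i1 i2 i3 i4 i6 _ hgood n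
    rw [htor] at hub
    rcases hub with ⟨-, rfl⟩ | ⟨_, _, _, _, _, _, _, _, hbad, _⟩
    · have e2 : (n : K) = p * (-b) := by
        apply mul_right_cancel₀ hp0
        linear_combination -e1
      rw [e2, v.map_mul] at hvn
      have : 0 < v p + v (-b) := add_pos_of_pos_of_nonneg hvp (neg_mem hb : -b ∈ s17R v)
      exact this.ne' hvn
    · exact Affine.Point.some_ne_zero _ hbad.symm
  refine ⟨hxR, ?_⟩
  by_contra hy
  have hyi : y⁻¹ ∈ s17R v := (s17_inv v y hy).le
  have hy0 : y ≠ 0 := by rintro rfl; exact hy (by simp)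
  apply hy
  have : y = (x ^ 3 + W.a₂ * x ^ 2 + W.a₄ * x + W.a₆) * y⁻¹ - W.a₁ * x - W.a₃ := by
    field_simp
    linear_combination heq
  rw [← s17_mem, this]
  apply_rules [sub_mem, add_mem, mul_mem, pow_mem]
end

section
/- Let K be an algebraically closed field with a nontrivial non-archimedean valuation v: K* → ℝ, valuation ring R, and residue field k of characteristic different from 2 and 3. Let E be an elliptic curve over K with a minimal integral Weierstrass model W having multiplicative reduction, i.e. v(Δ) > 0 and v(c₄) = 0, and let (x₀, y₀) ∈ k² be the unique singular point of the reduced curve Ē over k. Let n > 1 be an integer not divisible by the characteristic of k. Then there exists a point P = (x, y) ∈ E(K) of order n such that x, y ∈ R and the reductions of x and y modulo the maximal ideal are x₀ and y₀; i.e., P reduces to the singular point of Ē. -/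
open WeierstrassCurve

section S18Val
open Polynomial

variable {K : Type*} [Field K] (v : AddValuation K (WithTop ℝ))

/-- the valuation ring -/
def s18R : ValuationSubring K where
  carrier := {a | 0 ≤ v a}
  mul_mem' := by
    intro a b ha hb
    simp only [Set.mem_ofPred_eq] at *
    rw [AddValuation.map_mul]; exact add_nonneg ha hb
  one_mem' := by simp
  add_mem' := by
    intro a b ha hb
    simp only [Set.mem_ofPred_eq] at *
    exact (le_min ha hb).trans (v.map_add a b)
  zero_mem' := by simp
  neg_mem' := by
    intro a ha
    simpa using ha
  mem_or_inv_mem' := by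
    intro a
    simp only [Set.mem_ofPred_eq]
    by_cases h0 : a = 0
    · left; simp [h0]
    by_contra hc
    push Not at hc
    have h1 : v (a * a⁻¹) = 0 := by rw [mul_inv_cancel₀ h0]; simp
    rw [AddValuation.map_mul] at h1
    have h2 : v a + v a⁻¹ ≤ v a + 0 := add_le_add le_rfl hc.2.le
    rw [h1, add_zero] at h2
    exact absurd hc.1 (not_lt.2 h2)

variable {v}

lemma s18_mem {a : K} : a ∈ s18R v ↔ 0 ≤ v a := Iff.rfl

lemma s18_pos_mul {a b : K} (ha : 0 < v a) (hb : 0 ≤ v b) : 0 < v (a * b) := by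
  rw [AddValuation.map_mul]; exact add_pos_of_pos_of_nonneg ha hb

lemma s18_pos_add {a b : K} (ha : 0 < v a) (hb : 0 < v b) : 0 < v (a + b) :=
  (lt_min ha hb).trans_le (v.map_add a b)

lemma s18_int_add {a b : K} (ha : 0 ≤ v a) (hb : 0 ≤ v b) : 0 ≤ v (a + b) :=
  (s18R v).add_mem a b ha hb

lemma s18_int_mul {a b : K} (ha : 0 ≤ v a) (hb : 0 ≤ v b) : 0 ≤ v (a * b) :=
  (s18R v).mul_mem a b ha hb

lemma s18_int_sub {a b : K} (ha : 0 ≤ v a) (hb : 0 ≤ v b) : 0 ≤ v (a - b) :=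
  sub_mem (H := s18R v) ha hb

lemma s18_int_pow {a : K} (ha : 0 ≤ v a) (n : ℕ) : 0 ≤ v (a ^ n) :=
  pow_mem (S := s18R v) ha n

lemma s18_int_nat (n : ℕ) : 0 ≤ v (n : K) :=
  natCast_mem (s18R v) n

lemma s18_pos_sub {a b : K} (ha : 0 < v a) (hb : 0 < v b) : 0 < v (a - b) := by
  rw [sub_eq_add_neg]; exact s18_pos_add ha (by simpa using hb)

lemma s18_unit_add {a b : K} (ha : v a = 0) (hb : 0 < v b) : v (a + b) = 0 := by
  rw [v.map_add_eq_of_lt_left (by rw [ha]; exact hb), ha]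

lemma s18_unit_mul {a b : K} (ha : v a = 0) (hb : v b = 0) : v (a * b) = 0 := by
  rw [AddValuation.map_mul, ha, hb, add_zero]

lemma s18_unit_ne {a : K} (ha : v a = 0) : a ≠ 0 := by
  rintro rfl; simp at ha

lemma s18_unit_inv {a : K} (ha : v a = 0) : v a⁻¹ = 0 := by
  have h := s18_unit_ne ha
  have h1 : v (a * a⁻¹) = 0 := by rw [mul_inv_cancel₀ h]; simp
  rwa [AddValuation.map_mul, ha, zero_add] at h1

lemma s18_unit_div {a b : K} (ha : v a = 0) (hb : v b = 0) : v (a / b) = 0 := by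
  rw [div_eq_mul_inv]; exact s18_unit_mul ha (s18_unit_inv hb)

lemma s18_units_of_mul {a b : K} (ha : 0 ≤ v a) (hb : 0 ≤ v b) (h : v (a * b) = 0) :
    v a = 0 ∧ v b = 0 := by
  constructor
  · by_contra hc
    exact (s18_pos_mul (lt_of_le_of_ne ha (Ne.symm hc)) hb).ne' h
  · by_contra hc
    rw [mul_comm] at h
    exact (s18_pos_mul (lt_of_le_of_ne hb (Ne.symm hc)) ha).ne' h

lemma s18_inv_int {a : K} (ha : ¬ 0 < v a) : 0 ≤ v a⁻¹ := by
  rcases (s18R v).mem_or_inv_mem a with h | h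
  · have : v a = 0 := le_antisymm (not_lt.1 ha) h
    exact (s18_unit_inv this).ge
  · exact h

lemma s18_div_int {a b : K} (hb : b ≠ 0) (h : v b ≤ v a) : 0 ≤ v (a / b) := by
  by_contra hc
  have h1 : a = a / b * b := by field_simp
  rw [h1, AddValuation.map_mul] at h
  push Not at hc
  have hb' : v b ≠ ⊤ := by rwa [Ne, AddValuation.top_iff]
  have h2 : v (a / b) + v b < 0 + v b := WithTop.add_lt_add_right hb' hc
  rw [zero_add] at h2
  exact absurd h2 (not_lt.2 h)

/-- integral polynomials -/
noncomputable def S18I (v : AddValuation K (WithTop ℝ)) : Subring K[X] := liftsRing (s18R v).subtype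

lemma s18I_iff {p : K[X]} : p ∈ S18I v ↔ ∀ n, 0 ≤ v (p.coeff n) := by
  unfold S18I
  rw [← lifts_iff_liftsRing, lifts_iff_coeff_lifts]
  apply forall_congr'
  intro n
  constructor
  · rintro ⟨a, ha⟩; rw [← ha]; exact a.2
  · intro h; exact ⟨⟨_, h⟩, rfl⟩

lemma s18I_X : (X : K[X]) ∈ S18I v := by
  rw [s18I_iff]; intro n; rw [coeff_X]; split_ifs <;> simp

lemma s18I_C {a : K} (ha : 0 ≤ v a) : (C a : K[X]) ∈ S18I v := by
  rw [s18I_iff]; intro n; rw [coeff_C]; split_ifs <;> simp [ha]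

lemma s18I_quot {A Q : K[X]} (hA : A.Monic) (hAi : A ∈ S18I v) (hAQ : A * Q ∈ S18I v) :
    Q ∈ S18I v := by
  unfold S18I at *
  rw [← lifts_iff_liftsRing] at *
  obtain ⟨A', h1, -, h2⟩ := lifts_and_natDegree_eq_and_monic hAi hA
  obtain ⟨F, hF⟩ := hAQ
  refine ⟨F /ₘ A', ?_⟩
  simp only [coe_mapRingHom] at *
  rw [map_divByMonic _ h2, h1, hF, mul_divByMonic_cancel_left _ hA]

lemma s18I_eval {p : K[X]} (hp : p ∈ S18I v) {x : K} (hx : 0 ≤ v x) : 0 ≤ v (p.eval x) := by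
  rw [eval_eq_sum_range]
  exact sum_mem (S := s18R v) fun i _ => s18_int_mul (s18I_iff.1 hp i) (s18_int_pow hx i)

/-- congruence of values -/
lemma s18I_eval_pos {p : K[X]} (hp : p ∈ S18I v) {x : K} (hx : 0 < v x)
    (h : 0 < v (p.eval x)) : 0 < v (p.eval 0) := by
  have h1 := p.divX_mul_X_add
  have hd : p.divX ∈ S18I v := by
    rw [s18I_iff]; intro n; rw [coeff_divX]; exact s18I_iff.1 hp _
  have h2 : p.eval x = p.divX.eval x * x + p.coeff 0 := by
    conv_lhs => rw [← h1]
    simp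
  have h3 : p.eval 0 = p.eval x - x * p.divX.eval x := by
    rw [h2, ← coeff_zero_eq_eval_zero]; ring
  rw [h3]
  exact s18_pos_sub h (s18_pos_mul hx (s18I_eval hd hx.le))

lemma s18_root_pos [IsAlgClosed K] {p : K[X]} (hp : p.Monic) (h : 0 < v (p.eval 0)) :
    ∃ z, p.eval z = 0 ∧ 0 < v z := by
  by_contra hc
  push Not at hc
  have h1 := (IsAlgClosed.splits p).eval_eq_prod_roots_of_monic hp 0
  have h2 : ∀ s : Multiset K, (∀ z ∈ s, v z ≤ 0) →
      v (Multiset.map (fun z => (0 : K) - z) s).prod ≤ 0 := by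
    intro s
    induction s using Multiset.induction_on with
    | empty => simp
    | cons a s ih =>
      intro hs
      rw [Multiset.map_cons, Multiset.prod_cons, AddValuation.map_mul]
      refine add_nonpos ?_ (ih fun z hz => hs z (Multiset.mem_cons_of_mem hz))
      simpa using hs a (Multiset.mem_cons_self a s)
  have h3 := h2 p.roots fun z hz => hc z (by
    have := (mem_roots hp.ne_zero).1 hz
    exact this)
  rw [← h1] at h3
  exact absurd h (not_lt.2 h3)

lemma s18_root_int {p : K[X]} {N : ℕ} (hp : p ∈ S18I v) (hd : p.natDegree ≤ N)
    (hc : v (p.coeff N) = 0) {x : K} (hx : p.eval x = 0) : 0 ≤ v x := by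
  have hne : p.coeff N ≠ 0 := s18_unit_ne hc
  have hdeg : p.natDegree = N := le_antisymm hd (le_natDegree_of_ne_zero hne)
  have hlc : p.leadingCoeff = p.coeff N := by rw [leadingCoeff, hdeg]
  have hm : (C (p.coeff N)⁻¹ * p).Monic := by
    rw [Monic, leadingCoeff_mul, leadingCoeff_C, hlc, inv_mul_cancel₀ hne]
  have hi : C (p.coeff N)⁻¹ * p ∈ S18I v := mul_mem (s18I_C (s18_unit_inv hc).ge) hp
  have hi' := hi
  unfold S18I at hi'
  rw [← lifts_iff_liftsRing] at hi'
  obtain ⟨q, h1, -, h2⟩ := lifts_and_natDegree_eq_and_monic hi' hm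
  have hint : IsIntegral (s18R v) x := by
    refine ⟨q, h2, ?_⟩
    have : algebraMap (s18R v) K = (s18R v).subtype := rfl
    rw [this, ← eval_map, h1]
    simp [hx]
  obtain ⟨y, hy⟩ := IsIntegrallyClosed.isIntegral_iff.1 hint
  rw [← hy]
  exact y.2

end S18Val

section S18Abs
open Polynomial

variable {K : Type*} [Field K] {G : Type*} [AddCommGroup G]

/-- abstract data of x-coordinates on a group -/
structure S18X (r0 r1 : G → K) (b2 b4 b6 b8 : K) : Prop where
  zero0 : r0 0 = 1
  zero1 : r1 0 = 0
  some1 : ∀ P, P ≠ 0 → r1 P = 1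
  surj : ∀ x, ∃ P, P ≠ 0 ∧ r0 P = x
  inj : ∀ P Q, P ≠ 0 → Q ≠ 0 → r0 P = r0 Q → P = Q ∨ P = -Q
  neg : ∀ P, r0 (-P) = r0 P
  add : ∀ P Q, ∃ κ : K, κ ≠ 0 ∧
    (r0 P * r0 Q) ^ 2 - b4 * (r0 P * r0 Q) * (r1 P * r1 Q)
      - b6 * (r0 P * r1 Q + r1 P * r0 Q) * (r1 P * r1 Q) - b8 * (r1 P * r1 Q) ^ 2
      = κ * (r0 (P + Q) * r0 (P - Q)) ∧
    2 * (r0 P * r1 Q + r1 P * r0 Q) * (r0 P * r0 Q) + b2 * (r0 P * r0 Q) * (r1 P * r1 Q)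
      + b4 * (r0 P * r1 Q + r1 P * r0 Q) * (r1 P * r1 Q) + b6 * (r1 P * r1 Q) ^ 2
      = κ * (r0 (P + Q) * r1 (P - Q) + r1 (P + Q) * r0 (P - Q)) ∧
    (r0 P * r1 Q + r1 P * r0 Q) ^ 2 - 4 * (r0 P * r0 Q) * (r1 P * r1 Q)
      = κ * (r1 (P + Q) * r1 (P - Q))

/-- multiplication-by-n polynomials -/
structure S18Good (v : AddValuation K (WithTop ℝ)) (r0 r1 : G → K) (π : K) (n : ℕ)
    (A B : K[X]) : Prop where
  monic : A.Monic
  deg : A.natDegree = n ^ 2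
  degB : (X * B).natDegree ≤ n ^ 2
  coeffB : (X * B).coeff (n ^ 2) = (n : K) ^ 2
  intA : A ∈ S18I v
  intB : B ∈ S18I v
  rep : ∀ P, P ≠ 0 → ∃ μ : K, μ ≠ 0 ∧ A.eval (r0 P) = μ * r0 (n • P) ∧
    B.eval (r0 P) = μ * r1 (n • P)
  valA : ∃ a, v a = 0 ∧ A.eval π = π ^ (n ^ 2) * a
  valB : ∃ b, 0 ≤ v b ∧ (1 ≤ n → v b = 0) ∧ B.eval π * π ^ n = π ^ (n ^ 2) * b

variable {v : AddValuation K (WithTop ℝ)} {r0 r1 : G → K} {b2 b4 b6 b8 π : K}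

lemma s18_good_zero (h : S18X r0 r1 b2 b4 b6 b8) : S18Good v r0 r1 π 0 1 0 where
  monic := monic_one
  deg := by simp
  degB := by simp
  coeffB := by simp
  intA := one_mem _
  intB := zero_mem _
  rep := fun P _ => ⟨1, one_ne_zero, by simp [h.zero0], by simp [h.zero1]⟩
  valA := ⟨1, by simp, by simp⟩
  valB := ⟨0, by simp, by simp, by simp⟩

lemma s18_good_one (h : S18X r0 r1 b2 b4 b6 b8) : S18Good v r0 r1 π 1 X 1 where
  monic := monic_X
  deg := by simp
  degB := by simp
  coeffB := by simp
  intA := s18I_X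
  intB := one_mem _
  rep := fun P hP => ⟨1, one_ne_zero, by simp, by simp [h.some1 P hP]⟩
  valA := ⟨1, by simp, by simp⟩
  valB := ⟨1, by simp, by simp, by simp⟩

lemma S18X.r1_cases (h : S18X r0 r1 b2 b4 b6 b8) (P : G) :
    (r0 P = 1 ∧ r1 P = 0) ∨ r1 P = 1 := by
  by_cases hP : P = 0
  · left; subst hP; exact ⟨h.zero0, h.zero1⟩
  · right; exact h.some1 P hP

/-- algebraic core: unique factorisation of binary quadratic forms -/
lemma s18_fac {a b s0 s1 t0 t1 κ ν : K} (hν : ν ≠ 0) (hs : (s0 = 1 ∧ s1 = 0) ∨ s1 = 1)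
    (h0 : ν * s0 * a = κ * (t0 * s0))
    (h1 : ν * s1 * a + ν * s0 * b = κ * (t0 * s1 + t1 * s0))
    (h2 : ν * s1 * b = κ * (t1 * s1)) : a = κ / ν * t0 ∧ b = κ / ν * t1 := by
  rcases hs with ⟨rfl, rfl⟩ | rfl
  · constructor
    · field_simp; linear_combination h0
    · field_simp; linear_combination h1
  · constructor
    · field_simp; linear_combination h1 - s0 * h2
    · field_simp; linear_combination h2

lemma s18_natDegree_of_monic_mul {A Q : K[X]} {m d : ℕ} (hA : A.Monic) (hm : A.natDegree = m)
    (h : (A * Q).natDegree ≤ m + d) : Q.natDegree ≤ d := by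
  by_cases hQ : Q = 0
  · simp [hQ]
  rw [hA.natDegree_mul' hQ, hm] at h
  omega

variable [IsAlgClosed K]

lemma s18_split {A B f0 f1 f2 : K[X]} (hA : A ≠ 0)
    (hco : ∀ x, A.eval x ≠ 0 ∨ B.eval x ≠ 0)
    (hz : ∀ x, f0.eval x * B.eval x ^ 2 - f1.eval x * A.eval x * B.eval x
      + f2.eval x * A.eval x ^ 2 = 0) :
    ∃ A' B', A * A' = f0 ∧ A * B' + B * A' = f1 ∧ B * B' = f2 := by
  have hcop : IsCoprime A B := by
    rw [isCoprime_iff_aeval_ne_zero_of_isAlgClosed K K]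
    simpa using hco
  have hz' : f0 * B ^ 2 - f1 * A * B + f2 * A ^ 2 = 0 := by
    apply Polynomial.funext
    intro x
    simpa using hz x
  have h0 : A ∣ f0 := by
    have : A ∣ f0 * B ^ 2 := ⟨f1 * B - f2 * A, by linear_combination hz'⟩
    exact (hcop.pow_right (n := 2)).dvd_of_dvd_mul_right this
  obtain ⟨A', rfl⟩ := h0
  have hz2 : A' * B ^ 2 - f1 * B + f2 * A = 0 := by
    apply mul_left_cancel₀ hA
    linear_combination hz'
  have h1 : A ∣ f1 - B * A' := by
    have : A ∣ (f1 - B * A') * B := ⟨f2, by linear_combination -hz2⟩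
    exact hcop.dvd_of_dvd_mul_right this
  obtain ⟨B', hB'⟩ := h1
  refine ⟨A', B', rfl, by linear_combination -hB', ?_⟩
  apply mul_left_cancel₀ hA
  linear_combination -hz2 - B * hB'

end S18Abs

section S18Step
open Polynomial

variable {K : Type*} [Field K]

lemma s18_deg_f0 {U V : K[X]} {b4 b6 b8 : K} {N : ℕ} (hN : 1 ≤ N)
    (hU : U.Monic) (dU : U.natDegree = N) (dV : V.natDegree ≤ N - 1) :
    ((U * X) ^ 2 - C b4 * (U * X) * V - C b6 * (U + V * X) * V - C b8 * V ^ 2).Monic ∧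
    ((U * X) ^ 2 - C b4 * (U * X) * V - C b6 * (U + V * X) * V - C b8 * V ^ 2).natDegree
      = 2 * N + 2 := by
  have dC' : ∀ c : K, (C c).natDegree ≤ 0 := fun c => (natDegree_C c).le
  have dX : (X : K[X]).natDegree ≤ 1 := natDegree_X_le
  have dUX : (U * X).natDegree ≤ N + 1 := natDegree_mul_le_of_le dU.le dX
  have dVX : (V * X).natDegree ≤ N := (natDegree_mul_le_of_le dV dX).trans (by omega)
  have a1 : (U + V * X).natDegree ≤ N := natDegree_add_le_of_degree_le dU.le dVX
  have e : (U * X) ^ 2 - C b4 * (U * X) * V - C b6 * (U + V * X) * V - C b8 * V ^ 2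
      = (U * X) ^ 2 + -(C b4 * (U * X) * V + (C b6 * (U + V * X) * V + C b8 * (V * V))) := by
    ring
  have low : (-(C b4 * (U * X) * V + (C b6 * (U + V * X) * V + C b8 * (V * V)))).natDegree
      ≤ 2 * N + 1 := by
    rw [natDegree_neg]
    refine natDegree_add_le_of_degree_le ?_ (natDegree_add_le_of_degree_le ?_ ?_)
    · exact (natDegree_mul_le_of_le (natDegree_mul_le_of_le (dC' _) dUX) dV).trans (by omega)
    · exact (natDegree_mul_le_of_le (natDegree_mul_le_of_le (dC' _) a1) dV).trans (by omega)
    · exact (natDegree_mul_le_of_le (dC' _) (natDegree_mul_le_of_le dV dV)).trans (by omega)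
  have mCX : ((U * X) ^ 2).Monic := (hU.mul monic_X).pow 2
  have nCX : ((U * X) ^ 2).natDegree = 2 * N + 2 := by
    rw [natDegree_pow, hU.natDegree_mul monic_X, natDegree_X, dU]; ring
  rw [e]
  generalize -(C b4 * (U * X) * V + (C b6 * (U + V * X) * V + C b8 * (V * V))) = l at low
  have dlt : l.degree < ((U * X) ^ 2).degree := by
    rw [degree_eq_natDegree mCX.ne_zero, nCX]
    refine lt_of_le_of_lt degree_le_natDegree ?_
    exact_mod_cast (by omega : l.natDegree < 2 * N + 2)
  exact ⟨mCX.add_of_left dlt, by rw [natDegree_add_eq_left_of_degree_lt dlt, nCX]⟩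

lemma s18_deg_B {A B A' B' U V : K[X]} {b2 b4 b6 : K} {m : ℕ}
    (hA : A.Monic) (dA : A.natDegree = m ^ 2) (dB : (X * B).natDegree ≤ m ^ 2)
    (cB : (X * B).coeff (m ^ 2) = (m : K) ^ 2)
    (hU : U.Monic) (dU : U.natDegree = (m + 1) ^ 2) (dV : V.natDegree ≤ (m + 1) ^ 2 - 1)
    (dXV : (X * V).natDegree ≤ (m + 1) ^ 2)
    (cV : (X * V).coeff ((m + 1) ^ 2) = ((m + 1 : ℕ) : K) ^ 2)
    (hA' : A'.Monic) (dA' : A'.natDegree = (m + 2) ^ 2)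
    (E1 : A * B' + B * A' = C 2 * (U + V * X) * (U * X) + C b2 * (U * X) * V
      + C b4 * (U + V * X) * V + C b6 * V ^ 2) :
    (X * B').natDegree ≤ (m + 2) ^ 2 ∧
    (X * B').coeff ((m + 2) ^ 2) = ((m + 2 : ℕ) : K) ^ 2 := by
  have dC' : ∀ c : K, (C c).natDegree ≤ 0 := fun c => (natDegree_C c).le
  have hn : (m + 2) ^ 2 + m ^ 2 = 2 * (m + 1) ^ 2 + 2 := by ring
  have cU : U.coeff ((m + 1) ^ 2) = 1 := by rw [← dU]; exact hU
  have dU' := dU.le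
  have hpos : 1 ≤ (m + 1) ^ 2 := Nat.one_le_pow _ _ (by omega)
  have eXB : A * (X * B') = (C 2 * (U + X * V) * U) * X ^ 2 + ((C b2 * U) * (X * V) * X
      + C b4 * (U + X * V) * (X * V) + C b6 * V * (X * V)) - A' * (X * B) := by
    linear_combination X * E1
  generalize hN : (m + 1) ^ 2 = N at *
  have a1 : (U + X * V).natDegree ≤ N := natDegree_add_le_of_degree_le dU' dXV
  have dlow : ((C b2 * U) * (X * V) * X + C b4 * (U + X * V) * (X * V)
      + C b6 * V * (X * V)).natDegree ≤ 2 * N + 1 := by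
    refine natDegree_add_le_of_degree_le (natDegree_add_le_of_degree_le ?_ ?_) ?_
    · exact (natDegree_mul_le_of_le (natDegree_mul_le_of_le (natDegree_mul_le_of_le (dC' _) dU')
        dXV) natDegree_X_le).trans (by omega)
    · exact (natDegree_mul_le_of_le (natDegree_mul_le_of_le (dC' _) a1) dXV).trans (by omega)
    · exact (natDegree_mul_le_of_le (natDegree_mul_le_of_le (dC' _) dV) dXV).trans (by omega)
  generalize (C b2 * U) * (X * V) * X + C b4 * (U + X * V) * (X * V)
      + C b6 * V * (X * V) = L at eXB dlow
  have dtop : (C 2 * (U + X * V) * U).natDegree ≤ 2 * N :=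
    (natDegree_mul_le_of_le (natDegree_mul_le_of_le (dC' _) a1) dU').trans (by omega)
  have ctop : (C 2 * (U + X * V) * U).coeff (2 * N) = 2 * (1 + ((m + 1 : ℕ) : K) ^ 2) := by
    rw [two_mul N, mul_assoc, coeff_C_mul, coeff_mul_add_eq_of_natDegree_le a1 dU', cU, coeff_add,
      cU, cV, mul_one]
  generalize C 2 * (U + X * V) * U = T at eXB dtop ctop
  have dtop2 : (T * X ^ 2).natDegree ≤ 2 * N + 2 :=
    natDegree_mul_le_of_le dtop (natDegree_X_pow_le 2)
  have dA'B : (A' * (X * B)).natDegree ≤ 2 * N + 2 :=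
    (natDegree_mul_le_of_le dA'.le dB).trans (by omega)
  have dAXB : (A * (X * B')).natDegree ≤ m ^ 2 + (m + 2) ^ 2 := by
    rw [eXB]
    refine (natDegree_sub_le_of_le (natDegree_add_le_of_degree_le dtop2
      (dlow.trans (by omega))) dA'B).trans (by simp; omega)
  have dXB' : (X * B').natDegree ≤ (m + 2) ^ 2 := s18_natDegree_of_monic_mul hA dA dAXB
  refine ⟨dXB', ?_⟩
  have cA : A.coeff (m ^ 2) = 1 := by rw [← dA]; exact hA
  have cA' : A'.coeff ((m + 2) ^ 2) = 1 := by rw [← dA']; exact hA'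
  have h1 : (A * (X * B')).coeff (m ^ 2 + (m + 2) ^ 2) = (X * B').coeff ((m + 2) ^ 2) := by
    rw [coeff_mul_add_eq_of_natDegree_le dA.le dXB', cA, one_mul]
  have h2 : (A' * (X * B)).coeff ((m + 2) ^ 2 + m ^ 2) = (m : K) ^ 2 := by
    rw [coeff_mul_add_eq_of_natDegree_le dA'.le dB, cA', one_mul, cB]
  have h3 : (T * X ^ 2).coeff (2 * N + 2) = 2 * (1 + ((m + 1 : ℕ) : K) ^ 2) := by
    rw [coeff_mul_X_pow, ctop]
  have h4 : L.coeff (2 * N + 2) = 0 := coeff_eq_zero_of_natDegree_lt (by omega)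
  rw [hn] at h2
  rw [← h1, eXB, coeff_sub, coeff_add, add_comm (m ^ 2), hn, h3, h4, h2]
  push_cast
  ring

/-- scalar valuation computation -/
lemma s18_val {v : AddValuation K (WithTop ℝ)} {q w π a0 c0 a1 d1 b2 b4 b6 b8 g4 g6 g8 : K}
    {eA eB eA' eB' eU eV : K} (hq : q ≠ 0) (hw0 : w ≠ 0) (hπ0 : π ≠ 0) (hw : 0 ≤ v w)
    (hπ : 0 < v π) (h2 : 0 ≤ v (2 : K))
    (ha0 : v a0 = 0) (hc0 : 0 ≤ v c0) (ha1 : v a1 = 0) (hd1 : v d1 = 0) (hb2 : v b2 = 0)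
    (hg4 : 0 ≤ v g4) (hg6 : 0 ≤ v g6) (hg8 : 0 ≤ v g8)
    (hb4 : b4 = w ^ 2 * π ^ 5 * g4) (hb6 : b6 = w ^ 2 * π ^ 5 * g6)
    (hb8 : b8 = w ^ 2 * π ^ 5 * g8)
    (hA : eA = q * a0) (hB : eB * w = q * c0) (hU : eU = q * w ^ 2 * π * a1)
    (hV : eV * (w * π) = q * w ^ 2 * π * d1)
    (F0 : eA * eA' = (eU * π) ^ 2 - b4 * (eU * π) * eV - b6 * (eU + eV * π) * eV - b8 * eV ^ 2)
    (F1 : eA * eB' + eB * eA' = 2 * (eU + eV * π) * (eU * π) + b2 * (eU * π) * eV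
      + b4 * (eU + eV * π) * eV + b6 * eV ^ 2) :
    (∃ a, v a = 0 ∧ eA' = q * w ^ 4 * π ^ 4 * a) ∧
    (∃ b, v b = 0 ∧ eB' * (w * π ^ 2) = q * w ^ 4 * π ^ 4 * b) := by
  have hV' : eV = q * w * d1 := by
    apply mul_right_cancel₀ (mul_ne_zero hw0 hπ0)
    rw [hV]; ring
  have na0 := s18_unit_ne ha0
  have hB' : eB = q * c0 / w := by rw [← hB]; field_simp
  have iπ : 0 ≤ v π := hπ.le
  have ia1 : 0 ≤ v a1 := ha1.ge
  have id1 : 0 ≤ v d1 := hd1.ge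
  have ib2 : 0 ≤ v b2 := hb2.ge
  have is : 0 ≤ v (w * a1 + d1) := s18_int_add (s18_int_mul hw ia1) id1
  have hz : 0 ≤ v (0 - (g4 * w * π ^ 2 * a1 * d1 + g6 * π * (w * a1 + d1) * d1 + g8 * d1 * d1)) := by
    refine s18_int_sub (by simp) (s18_int_add (s18_int_add ?_ ?_) ?_) <;>
      repeat' first | assumption | apply s18_int_mul | apply s18_int_pow
  have hA2 : v ((a1 * a1 + π * (0 - (g4 * w * π ^ 2 * a1 * d1 + g6 * π * (w * a1 + d1) * d1
      + g8 * d1 * d1))) / a0) = 0 :=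
    s18_unit_div (s18_unit_add (s18_unit_mul ha1 ha1) (s18_pos_mul hπ hz)) ha0
  have eq1 : eA' = q * w ^ 4 * π ^ 4 * ((a1 * a1 + π * (0 - (g4 * w * π ^ 2 * a1 * d1
      + g6 * π * (w * a1 + d1) * d1 + g8 * d1 * d1))) / a0) := by
    rw [hA, hU, hV', hb4, hb6, hb8] at F0
    have : eA' = (q * a0 * eA') / (q * a0) := by field_simp
    rw [this, F0]
    field_simp
    ring
  refine ⟨⟨_, hA2, eq1⟩, ?_⟩
  generalize ((a1 * a1 + π * (0 - (g4 * w * π ^ 2 * a1 * d1 + g6 * π * (w * a1 + d1) * d1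
      + g8 * d1 * d1))) / a0) = a2 at hA2 eq1
  have ia2 : 0 ≤ v a2 := hA2.ge
  have hy : 0 ≤ v (2 * (w * a1 + d1) * a1 + g4 * w * π ^ 3 * (w * a1 + d1) * d1
      + g6 * w * π ^ 2 * d1 * d1 - π * a2 * c0) := by
    refine s18_int_sub (s18_int_add (s18_int_add ?_ ?_) ?_) ?_ <;>
      repeat' first | assumption | apply s18_int_mul | apply s18_int_pow
  refine ⟨_, s18_unit_div (s18_unit_add (s18_unit_mul (s18_unit_mul hb2 ha1) hd1)
    (s18_pos_mul hπ hy)) ha0, ?_⟩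
  have F2 : eA * eB' = 2 * (eU + eV * π) * (eU * π) + b2 * (eU * π) * eV
      + b4 * (eU + eV * π) * eV + b6 * eV ^ 2 - eB * eA' := by linear_combination F1
  rw [hA, hU, hV', hb4, hb6, hB', eq1] at F2
  have : eB' = (q * a0 * eB') / (q * a0) := by field_simp
  rw [this, F2]
  field_simp
  ring

variable {G : Type*} [AddCommGroup G] {v : AddValuation K (WithTop ℝ)} {r0 r1 : G → K}
  {b2 b4 b6 b8 π : K} [IsAlgClosed K]

lemma s18_key (h : S18X r0 r1 b2 b4 b6 b8) {m : ℕ} {U V : K[X]}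
    (hu : S18Good v r0 r1 π (m + 1) U V) (P : G) (hP : P ≠ 0) : ∃ κ : K, κ ≠ 0 ∧
      ((U * X) ^ 2 - C b4 * (U * X) * V - C b6 * (U + V * X) * V - C b8 * V ^ 2).eval (r0 P)
        = κ * (r0 ((m + 2) • P) * r0 (m • P)) ∧
      (C 2 * (U + V * X) * (U * X) + C b2 * (U * X) * V
        + C b4 * (U + V * X) * V + C b6 * V ^ 2).eval (r0 P)
        = κ * (r0 ((m + 2) • P) * r1 (m • P) + r1 ((m + 2) • P) * r0 (m • P)) ∧
      ((U + V * X) ^ 2 - C 4 * (U * X) * V).eval (r0 P)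
        = κ * (r1 ((m + 2) • P) * r1 (m • P)) := by
  obtain ⟨μ, hμ, e0, e1⟩ := hu.rep P hP
  obtain ⟨κ, hκ, k0, k1, k2⟩ := h.add ((m + 1) • P) P
  have q1 : (m + 1) • P + P = (m + 2) • P := by rw [← succ_nsmul]
  have q2 : (m + 1) • P - P = m • P := by rw [succ_nsmul]; abel
  rw [q1, q2, h.some1 P hP] at k0 k1 k2
  refine ⟨μ ^ 2 * κ, mul_ne_zero (pow_ne_zero _ hμ) hκ, ?_, ?_, ?_⟩
  · simp only [eval_sub, eval_add, eval_mul, eval_pow, eval_C, eval_X, e0, e1]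
    linear_combination μ ^ 2 * k0
  · simp only [eval_sub, eval_add, eval_mul, eval_pow, eval_C, eval_X, e0, e1]
    linear_combination μ ^ 2 * k1
  · simp only [eval_sub, eval_add, eval_mul, eval_pow, eval_C, eval_X, e0, e1]
    linear_combination μ ^ 2 * k2

lemma s18_step (h : S18X r0 r1 b2 b4 b6 b8) (hπ0 : π ≠ 0) (hπ : 0 < v π) (hb2 : v b2 = 0)
    {g4 g6 g8 : K} (m : ℕ) (hg4 : 0 ≤ v g4) (hg6 : 0 ≤ v g6) (hg8 : 0 ≤ v g8)
    (hb4 : b4 = (π ^ m) ^ 2 * π ^ 5 * g4) (hb6 : b6 = (π ^ m) ^ 2 * π ^ 5 * g6)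
    (hb8 : b8 = (π ^ m) ^ 2 * π ^ 5 * g8)
    {A B U V : K[X]} (hw : S18Good v r0 r1 π m A B) (hu : S18Good v r0 r1 π (m + 1) U V) :
    ∃ A' B', S18Good v r0 r1 π (m + 2) A' B' := by
  have i2 : 0 ≤ v (2 : K) := s18_int_nat 2
  have hwi : 0 ≤ v (π ^ m) := s18_int_pow hπ.le m
  have ib4 : 0 ≤ v b4 := by
    rw [hb4]; exact s18_int_mul (s18_int_mul (s18_int_pow hwi _) (s18_int_pow hπ.le _)) hg4
  have ib6 : 0 ≤ v b6 := by
    rw [hb6]; exact s18_int_mul (s18_int_mul (s18_int_pow hwi _) (s18_int_pow hπ.le _)) hg6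
  have ib8 : 0 ≤ v b8 := by
    rw [hb8]; exact s18_int_mul (s18_int_mul (s18_int_pow hwi _) (s18_int_pow hπ.le _)) hg8
  have iU := hu.intA
  have iV := hu.intB
  have hI0 : ((U * X) ^ 2 - C b4 * (U * X) * V - C b6 * (U + V * X) * V - C b8 * V ^ 2)
      ∈ S18I v :=
    sub_mem (sub_mem (sub_mem (pow_mem (mul_mem iU s18I_X) _) (mul_mem (mul_mem (s18I_C ib4)
      (mul_mem iU s18I_X)) iV)) (mul_mem (mul_mem (s18I_C ib6) (add_mem iU (mul_mem iV s18I_X)))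
      iV)) (mul_mem (s18I_C ib8) (pow_mem iV _))
  have hI1 : (C 2 * (U + V * X) * (U * X) + C b2 * (U * X) * V
        + C b4 * (U + V * X) * V + C b6 * V ^ 2) ∈ S18I v :=
    add_mem (add_mem (add_mem (mul_mem (mul_mem (s18I_C i2) (add_mem iU (mul_mem iV s18I_X)))
      (mul_mem iU s18I_X)) (mul_mem (mul_mem (s18I_C hb2.ge) (mul_mem iU s18I_X)) iV))
      (mul_mem (mul_mem (s18I_C ib4) (add_mem iU (mul_mem iV s18I_X))) iV))
      (mul_mem (s18I_C ib6) (pow_mem iV _))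
  obtain ⟨A', B', E0, E1, E2⟩ := s18_split (A := A) (B := B)
      (f0 := (U * X) ^ 2 - C b4 * (U * X) * V - C b6 * (U + V * X) * V - C b8 * V ^ 2)
      (f1 := C 2 * (U + V * X) * (U * X) + C b2 * (U * X) * V
        + C b4 * (U + V * X) * V + C b6 * V ^ 2)
      (f2 := (U + V * X) ^ 2 - C 4 * (U * X) * V) hw.monic.ne_zero (by
      intro x
      obtain ⟨P, hP, rfl⟩ := h.surj x
      obtain ⟨μ, hμ, e0, e1⟩ := hw.rep P hP
      rcases h.r1_cases (m • P) with hc | hc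
      · left; rw [e0, hc.1]; simpa using hμ
      · right; rw [e1, hc]; simpa using hμ) (by
      intro x
      obtain ⟨P, hP, rfl⟩ := h.surj x
      obtain ⟨μ, hμ, e0, e1⟩ := hw.rep P hP
      obtain ⟨κ, hκ, k0, k1, k2⟩ := s18_key h hu P hP
      rw [e0, e1, k0, k1, k2]
      ring)
  have hpos : 1 ≤ (m + 1) ^ 2 := Nat.one_le_pow _ _ (by omega)
  have dV : V.natDegree ≤ (m + 1) ^ 2 - 1 := by
    by_cases hD : V = 0
    · simp [hD]
    · have dD := hu.degB
      rw [natDegree_X_mul hD] at dD; omega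
  obtain ⟨f0m, f0d⟩ := s18_deg_f0 (b4 := b4) (b6 := b6) (b8 := b8) hpos hu.monic hu.deg dV
  rw [← E0] at f0m f0d hI0
  have mA' : A'.Monic := hw.monic.of_mul_monic_left f0m
  have dA' : A'.natDegree = (m + 2) ^ 2 := by
    rw [hw.monic.natDegree_mul mA', hw.deg] at f0d
    have : (m + 2) ^ 2 + m ^ 2 = 2 * (m + 1) ^ 2 + 2 := by ring
    omega
  have iA' : A' ∈ S18I v := s18I_quot hw.monic hw.intA hI0
  have iB' : B' ∈ S18I v := s18I_quot hw.monic hw.intA (by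
    rw [← E1] at hI1
    have h3 := sub_mem hI1 (mul_mem hw.intB iA')
    rwa [add_sub_cancel_right] at h3)
  obtain ⟨dB', cB'⟩ := s18_deg_B hw.monic hw.deg hw.degB hw.coeffB hu.monic hu.deg dV hu.degB
    hu.coeffB mA' dA' E1
  obtain ⟨a0, ha0, ea0⟩ := hw.valA
  obtain ⟨c0, hc0, -, ec0⟩ := hw.valB
  obtain ⟨a1, ha1, ea1⟩ := hu.valA
  obtain ⟨d1, -, hd1, ed1⟩ := hu.valB
  have p1 : π ^ ((m + 1) ^ 2) = π ^ (m ^ 2) * (π ^ m) ^ 2 * π := by ring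
  have p2 : π ^ ((m + 2) ^ 2) = π ^ (m ^ 2) * (π ^ m) ^ 4 * π ^ 4 := by ring
  have p3 : π ^ (m + 1) = π ^ m * π := by ring
  have p4 : π ^ (m + 2) = π ^ m * π ^ 2 := by ring
  rw [p1] at ea1
  rw [p1, p3] at ed1
  have F0 := congrArg (eval π) E0
  have F1 := congrArg (eval π) E1
  simp only [eval_sub, eval_add, eval_mul, eval_pow, eval_C, eval_X] at F0 F1
  obtain ⟨⟨a, ha, ea⟩, ⟨b, hb, eb⟩⟩ := s18_val (pow_ne_zero (m ^ 2) hπ0) (pow_ne_zero m hπ0) hπ0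
    hwi hπ i2 ha0 hc0 ha1 (hd1 (by omega)) hb2 hg4 hg6 hg8 hb4 hb6 hb8 ea0 ec0 ea1 ed1 F0 F1
  refine ⟨A', B', mA', dA', dB', cB', iA', iB', ?_, ⟨a, ha, by rw [p2]; exact ea⟩,
    ⟨b, hb.ge, fun _ => hb, by rw [p2, p4]; exact eb⟩⟩
  intro P hP
  obtain ⟨μ, hμ, e0, e1⟩ := hw.rep P hP
  obtain ⟨κ, hκ, k0, k1, k2⟩ := s18_key h hu P hP
  rw [← E0, eval_mul, e0] at k0
  rw [← E1, eval_add, eval_mul, eval_mul, e0, e1] at k1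
  rw [← E2, eval_mul, e1] at k2
  obtain ⟨x1, x2⟩ := s18_fac hμ (h.r1_cases (m • P)) k0 (by linear_combination k1) k2
  exact ⟨κ / μ, div_ne_zero hκ hμ, x1, x2⟩

lemma s18_good (h : S18X r0 r1 b2 b4 b6 b8) (hπ0 : π ≠ 0) (hπ : 0 < v π) (hb2 : v b2 = 0)
    {g4 g6 g8 : K} (n : ℕ) (hg4 : 0 ≤ v g4) (hg6 : 0 ≤ v g6) (hg8 : 0 ≤ v g8)
    (hb4 : b4 = π ^ (2 * n + 5) * g4) (hb6 : b6 = π ^ (2 * n + 5) * g6)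
    (hb8 : b8 = π ^ (2 * n + 5) * g8) :
    ∃ A B, S18Good v r0 r1 π n A B := by
  have key : ∀ m, m ≤ n → (∃ A B, S18Good v r0 r1 π m A B) ∧
      (∃ A B, S18Good v r0 r1 π (m + 1) A B) := by
    intro m
    induction m with
    | zero => exact fun _ => ⟨⟨_, _, s18_good_zero h⟩, ⟨_, _, s18_good_one h⟩⟩
    | succ m ih =>
      intro hm
      obtain ⟨⟨A, B, hw⟩, ⟨U, V, hu⟩⟩ := ih (by omega)
      refine ⟨⟨U, V, hu⟩, ?_⟩
      obtain ⟨k, rfl⟩ : ∃ k, n = m + k := ⟨n - m, by omega⟩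
      have e : π ^ (2 * (m + k) + 5) = (π ^ m) ^ 2 * π ^ 5 * (π ^ k) ^ 2 := by ring
      have ik : 0 ≤ v ((π ^ k) ^ 2) := s18_int_pow (s18_int_pow hπ.le _) _
      exact s18_step h hπ0 hπ hb2 m (s18_int_mul ik hg4) (s18_int_mul ik hg6)
        (s18_int_mul ik hg8) (by rw [hb4, e]; ring) (by rw [hb6, e]; ring)
        (by rw [hb8, e]; ring) hw hu
  exact (key n le_rfl).1

/-- existence of the multiplication polynomials, for small shifted coefficients -/
lemma s18_exists_good (h : S18X r0 r1 b2 b4 b6 b8) (hb2 : v b2 = 0) {ϖ : K} (hϖ0 : ϖ ≠ 0)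
    (hϖ : 0 < v ϖ) (hb4 : 0 < v b4) (hb6 : 0 < v b6) (hb8 : 0 < v b8) (n : ℕ) :
    ∃ π A B, π ≠ 0 ∧ 0 < v π ∧ S18Good v r0 r1 π n A B := by
  have hmin : ∀ t b : K, t ≠ 0 → 0 < v t → 0 < v b → ∃ s : K, s ≠ 0 ∧ 0 < v s ∧ v s ≤ v t ∧
      v s ≤ v b := by
    intro t b ht0 ht hb
    rcases le_total (v t) (v b) with hl | hl
    · exact ⟨t, ht0, ht, le_rfl, hl⟩
    · refine ⟨b, ?_, hb, hl, le_rfl⟩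
      rintro rfl
      rw [AddValuation.map_zero, top_le_iff, AddValuation.top_iff] at hl
      exact ht0 hl
  obtain ⟨t1, n1, p1, l1, k1⟩ := hmin ϖ b4 hϖ0 hϖ hb4
  obtain ⟨t2, n2, p2, l2, k2⟩ := hmin t1 b6 n1 p1 hb6
  obtain ⟨t, n3, p3, l3, k3⟩ := hmin t2 b8 n2 p2 hb8
  obtain ⟨π, hπ⟩ := IsAlgClosed.exists_pow_nat_eq t (n := 2 * n + 5) (by omega)
  have hπ0 : π ≠ 0 := by
    rintro rfl
    rw [zero_pow (by omega)] at hπ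
    exact n3 hπ.symm
  have hπp : 0 < v π := by
    by_contra hc
    have := s18_int_pow (s18_inv_int hc) (2 * n + 5)
    rw [inv_pow, hπ] at this
    have h2 := s18_pos_mul p3 this
    rw [mul_inv_cancel₀ n3, AddValuation.map_one] at h2
    exact lt_irrefl _ h2
  obtain ⟨A, B, hg⟩ := s18_good h hπ0 hπp hb2 n (s18_div_int n3 ((l3.trans l2).trans k1))
    (s18_div_int n3 (l3.trans k2)) (s18_div_int n3 k3) (by rw [hπ]; field_simp)
    (by rw [hπ]; field_simp) (by rw [hπ]; field_simp)
  exact ⟨π, A, B, hπ0, hπp, hg⟩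

end S18Step

section S18Tors
open Polynomial

variable {K : Type*} [Field K] {G : Type*} [AddCommGroup G] {v : AddValuation K (WithTop ℝ)}
  {r0 r1 : G → K} {b2 b4 b6 b8 π : K}

/-- points reducing to the singular point -/
def S18N (v : AddValuation K (WithTop ℝ)) (r0 : G → K) (P : G) : Prop := P ≠ 0 ∧ 0 < v (r0 P)

lemma s18_norm (h : S18X r0 r1 b2 b4 b6 b8) {P : G} (hP : ¬ S18N v r0 P) :
    ∃ l p : K, l ≠ 0 ∧ 0 ≤ v p ∧ r0 P = l ∧ r1 P = l * p := by
  by_cases h0 : P = 0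
  · subst h0
    exact ⟨1, 0, one_ne_zero, by simp, h.zero0, by rw [h.zero1]; simp⟩
  · have h1 : ¬ 0 < v (r0 P) := fun hc => hP ⟨h0, hc⟩
    have h2 : r0 P ≠ 0 := by
      intro hc; rw [hc] at h1; simp at h1
    exact ⟨r0 P, (r0 P)⁻¹, h2, s18_inv_int h1, rfl, by rw [h.some1 P h0, mul_inv_cancel₀ h2]⟩

lemma s18_E0_add (h : S18X r0 r1 b2 b4 b6 b8) (hb2 : 0 ≤ v b2) (hb4 : 0 < v b4) (hb6 : 0 < v b6)
    (hb8 : 0 < v b8) {P Q : G} (hP : ¬ S18N v r0 P) (hQ : ¬ S18N v r0 Q) :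
    ¬ S18N v r0 (P + Q) := by
  rintro ⟨hne, hpos⟩
  obtain ⟨l, p, hl, ip, l0, l1⟩ := s18_norm h hP
  obtain ⟨k, q, hk, iq, k0, k1⟩ := s18_norm h hQ
  obtain ⟨κ, -, e0, e1, e2⟩ := h.add P Q
  rw [h.some1 _ hne] at e1 e2
  rw [l0, l1, k0, k1] at e0 e1 e2
  generalize r0 (P + Q) = x at *
  have i2 : 0 ≤ v (2 : K) := s18_int_nat 2
  have i4 : 0 ≤ v (4 : K) := s18_int_nat 4
  have ib4 := hb4.le
  have ib6 := hb6.le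
  have ix := hpos.le
  have i1 : 0 ≤ v (1 : K) := by simp
  have key : 1 = b4 * (p * q) + b6 * ((q + p) * (p * q)) + b8 * (p * q) ^ 2
      + x * (2 * (q + p) + b2 * (p * q) + b4 * (q + p) * (p * q) + b6 * (p * q) ^ 2
        - x * ((q + p) ^ 2 - 4 * (p * q))) := by
    have : (l * k) ^ 2 ≠ 0 := pow_ne_zero _ (mul_ne_zero hl hk)
    apply mul_left_cancel₀ this
    linear_combination e0 - x * e1 + x ^ 2 * e2
  have : 0 < v (1 : K) := by
    rw [key]
    refine s18_pos_add (s18_pos_add (s18_pos_add (s18_pos_mul hb4 ?_) (s18_pos_mul hb6 ?_))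
      (s18_pos_mul hb8 ?_)) (s18_pos_mul hpos (s18_int_sub (s18_int_add (s18_int_add
        (s18_int_add ?_ ?_) ?_) ?_) (s18_int_mul ix (s18_int_sub ?_ ?_)))) <;>
    repeat' first | assumption | apply s18_int_mul | apply s18_int_pow | apply s18_int_add
  simp at this

lemma s18_E0_neg (h : S18X r0 r1 b2 b4 b6 b8) {P : G} (hP : ¬ S18N v r0 P) :
    ¬ S18N v r0 (-P) := by
  rintro ⟨hne, hpos⟩
  rw [h.neg] at hpos
  exact hP ⟨by simpa using hne, hpos⟩

lemma s18_E0_smul (h : S18X r0 r1 b2 b4 b6 b8) (hb2 : 0 ≤ v b2) (hb4 : 0 < v b4) (hb6 : 0 < v b6)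
    (hb8 : 0 < v b8) {P : G} (hP : ¬ S18N v r0 P) (n : ℕ) : ¬ S18N v r0 (n • P) := by
  induction n with
  | zero => simp [S18N]
  | succ n ih => rw [succ_nsmul]; exact s18_E0_add h hb2 hb4 hb6 hb8 ih hP

variable [IsAlgClosed K]

lemma s18_degB {n : ℕ} {A B : K[X]} (hn : 1 ≤ n) (hg : S18Good v r0 r1 π n A B) (c : K) :
    (A - C c * B).Monic ∧ (A - C c * B).natDegree = n ^ 2 := by
  have hpos : 1 ≤ n ^ 2 := Nat.one_le_pow _ _ hn
  have dlt : (C c * B).degree < A.degree := by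
    by_cases hB : B = 0
    · rw [hB, mul_zero, degree_zero, degree_eq_natDegree hg.monic.ne_zero]
      exact WithBot.bot_lt_coe _
    · apply degree_lt_degree
      have := hg.degB
      rw [natDegree_X_mul hB] at this
      have h2 : (C c * B).natDegree ≤ B.natDegree := natDegree_C_mul_le _ _
      rw [hg.deg]; omega
  refine ⟨hg.monic.sub_of_left dlt, ?_⟩
  rw [natDegree_sub_eq_left_of_natDegree_lt, hg.deg]
  by_cases hB : B = 0
  · rw [hB, hg.deg]; simp; omega
  · have := hg.degB
    rw [natDegree_X_mul hB] at this
    have h2 : (C c * B).natDegree ≤ B.natDegree := natDegree_C_mul_le _ _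
    rw [hg.deg]; omega

lemma s18_root_pt (h : S18X r0 r1 b2 b4 b6 b8) {n : ℕ} {A B : K[X]}
    (hg : S18Good v r0 r1 π n A B) {z c : K} (hz : (A - C c * B).eval z = 0) :
    ∃ R, R ≠ 0 ∧ r0 R = z ∧ n • R ≠ 0 ∧ r0 (n • R) = c := by
  obtain ⟨R, hR, rfl⟩ := h.surj z
  obtain ⟨μ, hμ, e0, e1⟩ := hg.rep R hR
  simp only [eval_sub, eval_mul, eval_C, e0, e1] at hz
  have hne : n • R ≠ 0 := by
    intro hc
    rw [hc, h.zero0, h.zero1] at hz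
    apply hμ; linear_combination hz
  refine ⟨R, hR, rfl, hne, ?_⟩
  rw [h.some1 _ hne] at hz
  apply mul_left_cancel₀ hμ
  linear_combination hz

lemma s18_surj (h : S18X r0 r1 b2 b4 b6 b8) {n : ℕ} (hn : 1 ≤ n) {A B : K[X]}
    (hg : S18Good v r0 r1 π n A B) (Q : G) : ∃ R, n • R = Q := by
  by_cases hQ : Q = 0
  · exact ⟨0, by simp [hQ]⟩
  obtain ⟨hm, hd⟩ := s18_degB hn hg (r0 Q)
  have hpos : 1 ≤ n ^ 2 := Nat.one_le_pow _ _ hn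
  obtain ⟨z, hz⟩ := IsAlgClosed.exists_root (A - C (r0 Q) * B) (by
    rw [degree_eq_natDegree hm.ne_zero, hd]
    exact_mod_cast (by omega : n ^ 2 ≠ 0))
  obtain ⟨R, hR, -, hne, hc⟩ := s18_root_pt h hg hz
  rcases h.inj _ _ hne hQ hc with h1 | h1
  · exact ⟨R, h1⟩
  · exact ⟨-R, by rw [smul_neg, h1, neg_neg]⟩

lemma s18_tors (h : S18X r0 r1 b2 b4 b6 b8) (hb2 : 0 ≤ v b2) (hb4 : 0 < v b4) (hb6 : 0 < v b6)
    (hb8 : 0 < v b8) {n : ℕ} (hn : 2 ≤ n) (hvn : v (n : K) = 0) {A B : K[X]} (hπ0 : π ≠ 0) (hπ : 0 < v π)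
    (hg : S18Good v r0 r1 π n A B) : ∃ T, S18N v r0 T ∧ n • T = 0 := by
  have hpos : 1 ≤ n ^ 2 := Nat.one_le_pow _ _ (by omega)
  have hA0 : 0 < v (A.eval 0) := by
    apply s18I_eval_pos hg.intA hπ
    obtain ⟨a, ha, ea⟩ := hg.valA
    rw [ea]
    obtain ⟨k, hk⟩ : ∃ k, n ^ 2 = k + 1 := ⟨n ^ 2 - 1, by omega⟩
    rw [hk, pow_succ', mul_assoc]
    exact s18_pos_mul hπ (s18_int_mul (s18_int_pow hπ.le _) ha.ge)
  have hB0 : 0 < v (B.eval 0) := by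
    apply s18I_eval_pos hg.intB hπ
    obtain ⟨b, ib, -, eb⟩ := hg.valB
    obtain ⟨k, hk⟩ : ∃ k, n ^ 2 = k + 1 + n := ⟨n ^ 2 - n - 1, by
      have : 2 * n ≤ n * n := Nat.mul_le_mul_right _ hn
      rw [sq]; omega⟩
    have : B.eval π = π * (π ^ k * b) := by
      apply mul_right_cancel₀ (pow_ne_zero n hπ0)
      rw [eb, hk]; ring
    rw [this]
    exact s18_pos_mul hπ (s18_int_mul (s18_int_pow hπ.le _) ib)
  -- a point outside with small image
  have ip : X * B - C 1 ∈ S18I v :=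
    sub_mem (mul_mem s18I_X hg.intB) (s18I_C (by simp))
  have cp : (X * B - C 1).coeff (n ^ 2) = (n : K) ^ 2 := by
    rw [coeff_sub, hg.coeffB, coeff_C_of_ne_zero (by omega), sub_zero]
  have dp : (X * B - C 1).natDegree ≤ n ^ 2 :=
    natDegree_sub_C.le.trans hg.degB
  have vp : v ((X * B - C 1).coeff (n ^ 2)) = 0 := by
    rw [cp, sq]; exact s18_unit_mul hvn hvn
  obtain ⟨x, hx⟩ := IsAlgClosed.exists_root (X * B - C 1) (by
    intro hc
    have h1 := natDegree_eq_zero_iff_degree_le_zero.2 hc.le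
    have h2 := le_natDegree_of_ne_zero (s18_unit_ne vp)
    omega)
  have hxi := s18_root_int ip dp vp hx
  have hxB : x * B.eval x = 1 := by
    have hx2 : (X * B - C 1).eval x = 0 := hx
    simp only [eval_sub, eval_mul, eval_X, eval_C] at hx2
    linear_combination hx2
  obtain ⟨ux, uB⟩ := s18_units_of_mul hxi (s18I_eval hg.intB hxi) (by rw [hxB]; simp)
  have nB := s18_unit_ne uB
  have ic : 0 ≤ v (A.eval x / B.eval x) :=
    s18_div_int nB (by rw [uB]; exact s18I_eval hg.intA hxi)
  obtain ⟨R', hR', e1, hne', hc'⟩ := s18_root_pt h hg (z := x) (c := A.eval x / B.eval x) (by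
    simp only [eval_sub, eval_mul, eval_C]; field_simp; ring)
  obtain ⟨hm, -⟩ := s18_degB (by omega) hg (A.eval x / B.eval x)
  obtain ⟨z, hz, vz⟩ := s18_root_pos (v := v) hm (by
    simp only [eval_sub, eval_mul, eval_C]
    rw [mul_comm]
    exact s18_pos_sub hA0 (s18_pos_mul hB0 ic))
  obtain ⟨R, hR, e2, hne, hc⟩ := s18_root_pt h hg hz
  have nR' : ¬ S18N v r0 R' := by
    rintro ⟨-, h2⟩
    rw [e1, ux] at h2
    exact lt_irrefl _ h2
  have hRN : S18N v r0 R := ⟨hR, by rw [e2]; exact vz⟩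
  rcases h.inj _ _ hne hne' (hc.trans hc'.symm) with h1 | h1
  · refine ⟨R - R', ?_, by rw [smul_sub, h1, sub_self]⟩
    by_contra hT
    have := s18_E0_add h hb2 hb4 hb6 hb8 hT nR'
    rw [sub_add_cancel] at this
    exact this hRN
  · refine ⟨R + R', ?_, by rw [smul_add, h1, neg_add_cancel]⟩
    by_contra hT
    have := s18_E0_add h hb2 hb4 hb6 hb8 hT (s18_E0_neg h nR')
    rw [add_neg_cancel_right] at this
    exact this hRN

lemma s18_abs (h : S18X r0 r1 b2 b4 b6 b8) (hb2 : v b2 = 0) (hb4 : 0 < v b4) (hb6 : 0 < v b6)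
    (hb8 : 0 < v b8) {ϖ : K} (hϖ0 : ϖ ≠ 0) (hϖ : 0 < v ϖ) (n : ℕ) (hn : 1 < n)
    (hvn : v (n : K) = 0) : ∃ P, addOrderOf P = n ∧ S18N v r0 P := by
  induction n using Nat.recOnPosPrimePosCoprime with
  | prime_pow p k hp hk =>
    have hvp : v (p : K) = 0 := by
      obtain ⟨j, rfl⟩ : ∃ j, k = j + 1 := ⟨k - 1, by omega⟩
      push_cast at hvn
      rw [pow_succ] at hvn
      exact (s18_units_of_mul (s18_int_pow (s18_int_nat p) _) (s18_int_nat p) hvn).2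
    obtain ⟨π, A, B, hπ0, hπ, hg⟩ := s18_exists_good h hb2 hϖ0 hϖ hb4 hb6 hb8 p
    obtain ⟨T, hT, hT0⟩ := s18_tors h hb2.ge hb4 hb6 hb8 hp.two_le hvp hπ0 hπ hg
    have : Fact p.Prime := ⟨hp⟩
    clear hn hvn
    obtain ⟨j, rfl⟩ : ∃ j, k = j + 1 := ⟨k - 1, by omega⟩
    clear hk
    induction j with
    | zero => exact ⟨T, by rw [zero_add, pow_one]; exact addOrderOf_eq_prime hT0 hT.1, hT⟩
    | succ j ih =>
      obtain ⟨P, hP, hPN⟩ := ih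
      obtain ⟨R, rfl⟩ := s18_surj h hp.one_le hg P
      refine ⟨R, ?_, ?_⟩
      · apply addOrderOf_eq_prime_pow
        · intro hc
          rw [pow_succ, mul_smul] at hc
          have h1 := addOrderOf_dvd_of_nsmul_eq_zero hc
          rw [hP] at h1
          have := (Nat.pow_dvd_pow_iff_le_right hp.one_lt).1 h1
          omega
        · rw [pow_succ, mul_smul, ← hP]
          exact addOrderOf_nsmul_eq_zero _
      · by_contra hc
        exact s18_E0_smul h hb2.ge hb4 hb6 hb8 hc p hPN
  | zero => omega
  | one => omega
  | coprime a b ha hb hab iha ihb =>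
    push_cast at hvn
    obtain ⟨va, vb⟩ := s18_units_of_mul (s18_int_nat a) (s18_int_nat b) hvn
    obtain ⟨P, hP, hPN⟩ := iha ha va
    obtain ⟨Q, hQ, hQN⟩ := ihb hb vb
    -- choose the combination
    have hPQ : addOrderOf (P + Q) = a * b := by
      rw [← hP, ← hQ]
      exact (AddCommute.all P Q).addOrderOf_add_eq_mul_addOrderOf_of_coprime (by rwa [hP, hQ])
    refine ⟨P + Q, hPQ, ?_⟩
    by_contra hc
    obtain ⟨u, hu⟩ : ∃ u : ℕ, u • (P + Q) = P := by
      obtain ⟨u, hu1, hu2⟩ := Nat.chineseRemainder hab 1 0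
      refine ⟨u, ?_⟩
      rw [smul_add]
      have h1 : u • P = 1 • P := by
        rw [nsmul_eq_nsmul_iff_modEq, hP]; exact hu1
      have h2 : u • Q = 0 • Q := by
        rw [nsmul_eq_nsmul_iff_modEq, hQ]; exact hu2
      rw [h1, h2]; simp
    have := s18_E0_smul h hb2.ge hb4 hb6 hb8 hc u
    rw [hu] at this
    exact this hPN

end S18Tors

section S18Curve

/-- the addition-subtraction law, as a relation -/
def S18L {K : Type*} [Field K] (b2 b4 b6 b8 p0 p1 q0 q1 s0 s1 d0 d1 : K) : Prop :=
  ∃ κ : K, κ ≠ 0 ∧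
    (p0 * q0) ^ 2 - b4 * (p0 * q0) * (p1 * q1)
      - b6 * (p0 * q1 + p1 * q0) * (p1 * q1) - b8 * (p1 * q1) ^ 2 = κ * (s0 * d0) ∧
    2 * (p0 * q1 + p1 * q0) * (p0 * q0) + b2 * (p0 * q0) * (p1 * q1)
      + b4 * (p0 * q1 + p1 * q0) * (p1 * q1) + b6 * (p1 * q1) ^ 2
      = κ * (s0 * d1 + s1 * d0) ∧
    (p0 * q1 + p1 * q0) ^ 2 - 4 * (p0 * q0) * (p1 * q1) = κ * (s1 * d1)

lemma S18X.shift {K : Type*} [Field K] {G : Type*} [AddCommGroup G] {r0 r1 : G → K}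
    {b2 b4 b6 b8 : K} (h : S18X r0 r1 b2 b4 b6 b8) (c : K) :
    S18X (fun P => r0 P - c * r1 P) r1 (b2 + 12 * c) (b4 + b2 * c + 6 * c ^ 2)
      (b6 + 2 * b4 * c + b2 * c ^ 2 + 4 * c ^ 3)
      (b8 + 3 * b6 * c + 3 * b4 * c ^ 2 + b2 * c ^ 3 + 3 * c ^ 4) where
  zero0 := by simp [h.zero0, h.zero1]
  zero1 := h.zero1
  some1 := h.some1
  surj := by
    intro x
    obtain ⟨P, hP, e⟩ := h.surj (x + c)
    exact ⟨P, hP, by simp [e, h.some1 P hP]⟩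
  inj := by
    intro P Q hP hQ e
    apply h.inj P Q hP hQ
    simpa [h.some1 P hP, h.some1 Q hQ] using e
  neg := by
    intro P
    by_cases hP : P = 0
    · simp [hP]
    · simp [h.neg, h.some1 P hP, h.some1 (-P) (by simpa using hP)]
  add := by
    intro P Q
    obtain ⟨κ, hκ, e0, e1, e2⟩ := h.add P Q
    refine ⟨κ, hκ, ?_, ?_, ?_⟩
    · linear_combination e0 - c * e1 + c ^ 2 * e2
    · linear_combination e1 - 2 * c * e2
    · linear_combination e2

open WeierstrassCurve.Affine

variable {K : Type*} [Field K] [DecidableEq K] (W : WeierstrassCurve K)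

lemma s18_law_ne (h2 : (2 : K) ≠ 0) {x1 y1 x2 y2 : K} (h1 : W.toAffine.Equation x1 y1)
    (h1' : W.toAffine.Equation x2 y2) (hx : x1 ≠ x2) :
    S18L W.b₂ W.b₄ W.b₆ W.b₈ x1 1 x2 1
      (W.toAffine.addX x1 x2 (W.toAffine.slope x1 x2 y1 y2)) 1
      (W.toAffine.addX x1 x2 (W.toAffine.slope x1 x2 y1 (W.toAffine.negY x2 y2))) 1 := by
  rw [slope_of_X_ne hx, slope_of_X_ne hx]
  rw [equation_iff] at h1 h1'
  have hd : x1 - x2 ≠ 0 := sub_ne_zero.2 hx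
  have hb8 := W.b_relation
  have g1 : (2 * y1 + W.a₁ * x1 + W.a₃) ^ 2 = 4 * x1 ^ 3 + W.b₂ * x1 ^ 2 + 2 * W.b₄ * x1 + W.b₆ := by
    simp only [b₂, b₄, b₆]; linear_combination 4 * h1
  have g2 : (2 * y2 + W.a₁ * x2 + W.a₃) ^ 2 = 4 * x2 ^ 3 + W.b₂ * x2 ^ 2 + 2 * W.b₄ * x2 + W.b₆ := by
    simp only [b₂, b₄, b₆]; linear_combination 4 * h1'
  have h4 : (4 : K) ≠ 0 := by
    have : (4 : K) = 2 * 2 := by norm_num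
    rw [this]; exact mul_ne_zero h2 h2
  have s1 : 4 * ((x1 - x2) ^ 2 * W.toAffine.addX x1 x2 ((y1 - y2) / (x1 - x2)))
      = ((2 * y1 + W.a₁ * x1 + W.a₃) - (2 * y2 + W.a₁ * x2 + W.a₃)) ^ 2
        - (W.b₂ + 4 * x1 + 4 * x2) * (x1 - x2) ^ 2 := by
    simp only [addX, b₂]
    field_simp
    ring
  have s2 : 4 * ((x1 - x2) ^ 2 * W.toAffine.addX x1 x2 ((y1 - W.toAffine.negY x2 y2) / (x1 - x2)))
      = ((2 * y1 + W.a₁ * x1 + W.a₃) + (2 * y2 + W.a₁ * x2 + W.a₃)) ^ 2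
        - (W.b₂ + 4 * x1 + 4 * x2) * (x1 - x2) ^ 2 := by
    simp only [addX, negY, b₂]
    field_simp
    ring
  generalize W.toAffine.addX x1 x2 ((y1 - y2) / (x1 - x2)) = X3 at *
  generalize W.toAffine.addX x1 x2 ((y1 - W.toAffine.negY x2 y2) / (x1 - x2)) = X4 at *
  generalize 2 * y1 + W.a₁ * x1 + W.a₃ = Y1 at *
  generalize 2 * y2 + W.a₁ * x2 + W.a₃ = Y2 at *
  refine ⟨(x1 - x2) ^ 2, pow_ne_zero _ hd, ?_, ?_, ?_⟩
  · apply mul_left_cancel₀ (mul_ne_zero (mul_ne_zero h4 h4) (pow_ne_zero 2 hd))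
    have e : 4 * 4 * (x1 - x2) ^ 2 * ((x1 - x2) ^ 2 * (X3 * X4))
      = (4 * ((x1 - x2) ^ 2 * X3)) * (4 * ((x1 - x2) ^ 2 * X4)) := by ring
    rw [e, s1, s2]
    have e2 : ((Y1 - Y2) ^ 2 - (W.b₂ + 4 * x1 + 4 * x2) * (x1 - x2) ^ 2)
      * ((Y1 + Y2) ^ 2 - (W.b₂ + 4 * x1 + 4 * x2) * (x1 - x2) ^ 2)
      = (Y1 ^ 2 - Y2 ^ 2) ^ 2
        - 2 * (Y1 ^ 2 + Y2 ^ 2) * ((W.b₂ + 4 * x1 + 4 * x2) * (x1 - x2) ^ 2)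
        + ((W.b₂ + 4 * x1 + 4 * x2) * (x1 - x2) ^ 2) ^ 2 := by ring
    rw [e2, g1, g2]
    linear_combination (-4 * (x1 - x2) ^ 2) * hb8
  · apply mul_left_cancel₀ h4
    linear_combination -s1 - s2 - 2 * g1 - 2 * g2
  · ring

lemma s18_law_self {x y : K} (h : W.toAffine.Nonsingular x y) :
    S18L W.b₂ W.b₄ W.b₆ W.b₈ x 1 x 1
      ((Point.some x y h + Point.some x y h).xRep 0)
      ((Point.some x y h + Point.some x y h).xRep 1) 1 0 := by
  have heq := (equation_iff ..).1 h.1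
  have hN : x ^ 4 - W.b₄ * x ^ 2 - 2 * W.b₆ * x - W.b₈ =
      (3 * x ^ 2 + 2 * W.a₂ * x + W.a₄ - W.a₁ * y) ^ 2
        + W.a₁ * (3 * x ^ 2 + 2 * W.a₂ * x + W.a₄ - W.a₁ * y) * (2 * y + W.a₁ * x + W.a₃)
        - (W.a₂ + 2 * x) * (2 * y + W.a₁ * x + W.a₃) ^ 2 := by
    simp only [b₄, b₆, b₈]
    linear_combination (8 * x + 4 * W.a₂ + W.a₁ ^ 2) * heq
  have hY : 4 * x ^ 3 + W.b₂ * x ^ 2 + 2 * W.b₄ * x + W.b₆ = (2 * y + W.a₁ * x + W.a₃) ^ 2 := by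
    simp only [b₂, b₄, b₆]
    linear_combination -4 * heq
  by_cases hy : y = W.toAffine.negY x y
  · rw [Point.add_self_of_Y_eq hy, Point.xRep_zero]
    simp only [Matrix.cons_val_zero, Matrix.cons_val_one]
    have hY0 : 2 * y + W.a₁ * x + W.a₃ = 0 := by
      rw [negY] at hy; linear_combination hy
    rw [hY0] at hN hY
    refine ⟨(3 * x ^ 2 + 2 * W.a₂ * x + W.a₄ - W.a₁ * y) ^ 2, ?_, ?_, ?_, ?_⟩
    · apply pow_ne_zero
      rcases ((nonsingular_iff' ..).1 h).2 with h3 | h3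
      · intro hc; apply h3; linear_combination -hc
      · exact absurd hY0 h3
    · linear_combination hN
    · linear_combination hY
    · ring
  · rw [Point.add_self_of_Y_ne hy, Point.xRep_some]
    simp only [Matrix.cons_val_zero, Matrix.cons_val_one]
    have hY0 : 2 * y + W.a₁ * x + W.a₃ ≠ 0 := by
      intro hc; apply hy; rw [negY]; linear_combination hc
    refine ⟨(2 * y + W.a₁ * x + W.a₃) ^ 2, pow_ne_zero _ hY0, ?_, ?_, ?_⟩
    · rw [slope_of_Y_ne rfl hy, addX]
      have : y - W.toAffine.negY x y = 2 * y + W.a₁ * x + W.a₃ := by rw [negY]; ring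
      rw [this]
      have e : (2 * y + W.a₁ * x + W.a₃) ^ 2 * (((3 * x ^ 2 + 2 * W.a₂ * x + W.a₄ - W.a₁ * y) /
          (2 * y + W.a₁ * x + W.a₃)) ^ 2 + W.a₁ * ((3 * x ^ 2 + 2 * W.a₂ * x + W.a₄ - W.a₁ * y) /
          (2 * y + W.a₁ * x + W.a₃)) - W.a₂ - x - x) =
          (3 * x ^ 2 + 2 * W.a₂ * x + W.a₄ - W.a₁ * y) ^ 2
        + W.a₁ * (3 * x ^ 2 + 2 * W.a₂ * x + W.a₄ - W.a₁ * y) * (2 * y + W.a₁ * x + W.a₃)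
        - (W.a₂ + 2 * x) * (2 * y + W.a₁ * x + W.a₃) ^ 2 := by
        generalize 2 * y + W.a₁ * x + W.a₃ = Y at *
        generalize 3 * x ^ 2 + 2 * W.a₂ * x + W.a₄ - W.a₁ * y = Z at *
        field_simp
        ring
      refine Eq.trans ?_ (e.symm.trans (congrArg _ (mul_one _).symm))
      linear_combination hN
    · linear_combination hY
    · ring

lemma s18_law (h2 : (2 : K) ≠ 0) (P Q : W.toAffine.Point) :
    S18L W.b₂ W.b₄ W.b₆ W.b₈ (P.xRep 0) (P.xRep 1) (Q.xRep 0) (Q.xRep 1)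
      ((P + Q).xRep 0) ((P + Q).xRep 1) ((P - Q).xRep 0) ((P - Q).xRep 1) := by
  by_cases hP : P = 0
  · subst hP
    rw [zero_add, zero_sub, Point.xRep_neg, Point.xRep_zero]
    refine ⟨1, one_ne_zero, ?_, ?_, ?_⟩ <;> simp <;> ring
  by_cases hQ : Q = 0
  · subst hQ
    rw [add_zero, sub_zero, Point.xRep_zero]
    refine ⟨1, one_ne_zero, ?_, ?_, ?_⟩ <;> simp <;> ring
  rcases P with _ | ⟨x1, y1, h1⟩
  · exact absurd rfl hP
  rcases Q with _ | ⟨x2, y2, h3⟩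
  · exact absurd rfl hQ
  by_cases hx : x1 = x2
  · rcases Point.X_eq_iff.1 hx with e | e
    · rw [e, sub_self, Point.xRep_zero]
      exact s18_law_self W h3
    · rw [e, neg_add_cancel, ← neg_add', Point.xRep_neg, Point.xRep_neg, Point.xRep_zero]
      obtain ⟨κ, hκ, e0, e1, e2⟩ := s18_law_self W h3
      refine ⟨κ, hκ, ?_, ?_, ?_⟩ <;>
        simp only [Point.xRep_some, Matrix.cons_val_zero, Matrix.cons_val_one]
      · linear_combination e0
      · linear_combination e1
      · linear_combination e2
  · rw [sub_eq_add_neg, Point.neg_some, Point.add_of_X_ne hx, Point.add_of_X_ne hx]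
    exact s18_law_ne W h2 h1.1 h3.1 hx

lemma s18_X [IsAlgClosed K] (h2 : (2 : K) ≠ 0) (hΔ : W.Δ ≠ 0) :
    S18X (fun P : W.toAffine.Point => P.xRep 0) (fun P => P.xRep 1) W.b₂ W.b₄ W.b₆ W.b₈ where
  zero0 := by simp
  zero1 := by simp
  some1 := by
    rintro (_ | ⟨x, y, h⟩) hP
    · exact absurd rfl hP
    · simp
  surj := by
    intro x
    obtain ⟨z, hz⟩ := IsAlgClosed.exists_pow_nat_eq
      (4 * x ^ 3 + W.b₂ * x ^ 2 + 2 * W.b₄ * x + W.b₆) (n := 2) (by norm_num)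
    have h4 : (4 : K) ≠ 0 := by
      have : (4 : K) = 2 * 2 := by norm_num
      rw [this]; exact mul_ne_zero h2 h2
    have he : W.toAffine.Equation x ((z - W.a₁ * x - W.a₃) / 2) := by
      rw [equation_iff]
      apply mul_left_cancel₀ h4
      simp only [b₂, b₄, b₆] at hz
      field_simp
      linear_combination hz
    have hns := (W.toAffine.equation_iff_nonsingular_of_Δ_ne_zero hΔ).1 he
    exact ⟨Point.some _ _ hns, Point.some_ne_zero _, by simp⟩
  inj := by
    rintro (_ | ⟨x, y, h⟩) (_ | ⟨x', y', h'⟩) hP hQ e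
    · exact absurd rfl hP
    · exact absurd rfl hP
    · exact absurd rfl hQ
    · exact Point.X_eq_iff.1 (by simpa using e)
  neg := by simp
  add := s18_law W h2

end S18Curve

section S18Final
open WeierstrassCurve.Affine

open scoped Classical in
lemma s18_final {K : Type*} [Field K] [IsAlgClosed K] (v : AddValuation K (WithTop ℝ))
    (hv2 : v (2 : K) = 0)
    (W : WeierstrassCurve K) (hΔ : W.Δ ≠ 0) (hint : IsIntegralModel v W)
    (hΔpos : 0 < v W.Δ) (hc₄ : v W.c₄ = 0)
    (x₀ y₀ : K) (hx₀ : 0 ≤ v x₀) (hy₀ : 0 ≤ v y₀)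
    (hsing₀ : 0 < v (y₀ ^ 2 + W.a₁ * x₀ * y₀ + W.a₃ * y₀
      - x₀ ^ 3 - W.a₂ * x₀ ^ 2 - W.a₄ * x₀ - W.a₆))
    (hsingX : 0 < v (W.a₁ * y₀ - 3 * x₀ ^ 2 - 2 * W.a₂ * x₀ - W.a₄))
    (hsingY : 0 < v (2 * y₀ + W.a₁ * x₀ + W.a₃))
    (n : ℕ) (hn : 1 < n) (hvn : v (n : K) = 0) :
    ∃ (x y : K) (h : W.toAffine.Nonsingular x y),
      addOrderOf (WeierstrassCurve.Affine.Point.some x y h) = n ∧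
      0 ≤ v x ∧ 0 ≤ v y ∧ 0 < v (x - x₀) ∧ 0 < v (y - y₀) := by
  obtain ⟨i1, i2, i3, i4, i6⟩ := hint
  have n2 := s18_unit_ne hv2
  have j2 : 0 ≤ v (2 : K) := hv2.ge
  have j3 : 0 ≤ v (3 : K) := s18_int_nat 3
  have j4 : 0 ≤ v (4 : K) := s18_int_nat 4
  have j12 : 0 ≤ v (12 : K) := s18_int_nat 12
  have j24 : 0 ≤ v (24 : K) := s18_int_nat 24
  have v4 : v (4 : K) = 0 := by
    have : (4 : K) = 2 * 2 := by norm_num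
    rw [this]; exact s18_unit_mul hv2 hv2
  have ib2 : 0 ≤ v (W.b₂ + 12 * x₀) := by
    rw [b₂]
    repeat' first | assumption | apply s18_int_mul | apply s18_int_pow | apply s18_int_add
  have hb4 : 0 < v (W.b₄ + W.b₂ * x₀ + 6 * x₀ ^ 2) := by
    have : W.b₄ + W.b₂ * x₀ + 6 * x₀ ^ 2 = (2 * y₀ + W.a₁ * x₀ + W.a₃) * W.a₁
        - (W.a₁ * y₀ - 3 * x₀ ^ 2 - 2 * W.a₂ * x₀ - W.a₄) * 2 := by
      rw [b₂, b₄]; ring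
    rw [this]
    exact s18_pos_sub (s18_pos_mul hsingY i1) (s18_pos_mul hsingX j2)
  have hb6 : 0 < v (W.b₆ + 2 * W.b₄ * x₀ + W.b₂ * x₀ ^ 2 + 4 * x₀ ^ 3) := by
    have : W.b₆ + 2 * W.b₄ * x₀ + W.b₂ * x₀ ^ 2 + 4 * x₀ ^ 3
        = (2 * y₀ + W.a₁ * x₀ + W.a₃) * (2 * y₀ + W.a₁ * x₀ + W.a₃)
        - (y₀ ^ 2 + W.a₁ * x₀ * y₀ + W.a₃ * y₀
      - x₀ ^ 3 - W.a₂ * x₀ ^ 2 - W.a₄ * x₀ - W.a₆) * 4 := by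
      rw [b₂, b₄, b₆]; ring
    rw [this]
    exact s18_pos_sub (s18_pos_mul hsingY hsingY.le) (s18_pos_mul hsing₀ j4)
  have hb8 : 0 < v (W.b₈ + 3 * W.b₆ * x₀ + 3 * W.b₄ * x₀ ^ 2 + W.b₂ * x₀ ^ 3 + 3 * x₀ ^ 4) := by
    have e : 4 * (W.b₈ + 3 * W.b₆ * x₀ + 3 * W.b₄ * x₀ ^ 2 + W.b₂ * x₀ ^ 3 + 3 * x₀ ^ 4)
        = (W.b₆ + 2 * W.b₄ * x₀ + W.b₂ * x₀ ^ 2 + 4 * x₀ ^ 3) * (W.b₂ + 12 * x₀)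
          - (W.b₄ + W.b₂ * x₀ + 6 * x₀ ^ 2) * (W.b₄ + W.b₂ * x₀ + 6 * x₀ ^ 2) := by
      linear_combination W.b_relation
    have h1 := s18_pos_sub (s18_pos_mul hb6 ib2) (s18_pos_mul hb4 hb4.le)
    rw [← e, AddValuation.map_mul, v4, zero_add] at h1
    exact h1
  have hb2 : v (W.b₂ + 12 * x₀) = 0 := by
    have e : (W.b₂ + 12 * x₀) * (W.b₂ + 12 * x₀)
        = W.c₄ + (W.b₄ + W.b₂ * x₀ + 6 * x₀ ^ 2) * 24 := by
      rw [WeierstrassCurve.c₄]; ring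
    have h1 := s18_unit_add hc₄ (s18_pos_mul hb4 j24)
    rw [← e] at h1
    exact (s18_units_of_mul ib2 ib2 h1).1
  obtain ⟨P, hP, hP0, hPN⟩ := s18_abs ((s18_X W n2 hΔ).shift x₀) hb2 hb4 hb6 hb8 hΔ hΔpos n hn hvn
  rcases P with _ | ⟨x, y, h⟩
  · exact absurd rfl hP0
  have hx : 0 < v (x - x₀) := by simpa using hPN
  have hy : 0 < v (y - y₀) := by
    by_contra hc
    have hi := s18_inv_int hc
    have hd0 : y - y₀ ≠ 0 := by
      intro h0; rw [h0] at hc; simp at hc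
    have heq := (equation_iff ..).1 h.1
    have key : (1 : K) = -((y₀ ^ 2 + W.a₁ * x₀ * y₀ + W.a₃ * y₀
      - x₀ ^ 3 - W.a₂ * x₀ ^ 2 - W.a₄ * x₀ - W.a₆) * (y - y₀)⁻¹ ^ 2
      + (W.a₁ * y₀ - 3 * x₀ ^ 2 - 2 * W.a₂ * x₀ - W.a₄) * ((x - x₀) * (y - y₀)⁻¹ ^ 2)
      + (2 * y₀ + W.a₁ * x₀ + W.a₃) * (y - y₀)⁻¹
      + (x - x₀) * (W.a₁ * (y - y₀)⁻¹ - (3 * x₀ + W.a₂ + (x - x₀)) * (x - x₀) * (y - y₀)⁻¹ ^ 2)) := by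
      obtain ⟨d, rfl⟩ : ∃ d, y = y₀ + d := ⟨y - y₀, by ring⟩
      obtain ⟨e, rfl⟩ : ∃ e, x = x₀ + e := ⟨x - x₀, by ring⟩
      simp only [add_sub_cancel_left] at hd0 ⊢
      field_simp
      linear_combination heq
    have h1 : 0 < v (1 : K) := by
      have ix := hx.le
      rw [key, AddValuation.map_neg]
      refine s18_pos_add (s18_pos_add (s18_pos_add (s18_pos_mul hsing₀ ?_) (s18_pos_mul hsingX ?_))
        (s18_pos_mul hsingY hi)) (s18_pos_mul hx (s18_int_sub ?_ ?_)) <;>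
      repeat' first | assumption | apply s18_int_mul | apply s18_int_pow | apply s18_int_add
    simp at h1
  refine ⟨x, y, h, hP, ?_, ?_, hx, hy⟩
  · have := s18_int_add hx.le hx₀
    rwa [sub_add_cancel] at this
  · have := s18_int_add hy.le hy₀
    rwa [sub_add_cancel] at this

end S18Final

open scoped Classical in
/-- Let `K` be an algebraically closed field with a nontrivial
non-archimedean valuation `v` whose residue field has characteristic ≠ 2, 3.  Let `E` be an
elliptic curve over `K` with a minimal integral Weierstrass model `W` having multiplicative
reduction (`v Δ > 0`, `v c₄ = 0`), and let `(x₀, y₀)` (given here by a lift to the valuation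
ring) be the singular point of the reduced curve over the residue field, i.e. the reduced
Weierstrass polynomial and both its partial derivatives vanish at the reduction of `(x₀, y₀)`.
Let `n > 1` be an integer not divisible by the residue characteristic (`v n = 0`).  Then there
is a point `P = (x, y) ∈ E(K)` of order `n` with `x, y` in the valuation ring which reduces
to the singular point `(x₀, y₀)` of the reduced curve. -/
theorem statement18 {K : Type*} [Field K] [IsAlgClosed K] (v : AddValuation K (WithTop ℝ))
    (hv : ∃ x : K, x ≠ 0 ∧ v x ≠ 0) (hv2 : v (2 : K) = 0) (hv3 : v (3 : K) = 0)
    (W : WeierstrassCurve K) (hΔ : W.Δ ≠ 0) (hint : IsIntegralModel v W)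
    (hmin : IsMinimalModel v W W) (hΔpos : 0 < v W.Δ) (hc₄ : v W.c₄ = 0)
    (x₀ y₀ : K) (hx₀ : 0 ≤ v x₀) (hy₀ : 0 ≤ v y₀)
    (hsing₀ : 0 < v (y₀ ^ 2 + W.a₁ * x₀ * y₀ + W.a₃ * y₀
      - x₀ ^ 3 - W.a₂ * x₀ ^ 2 - W.a₄ * x₀ - W.a₆))
    (hsingX : 0 < v (W.a₁ * y₀ - 3 * x₀ ^ 2 - 2 * W.a₂ * x₀ - W.a₄))
    (hsingY : 0 < v (2 * y₀ + W.a₁ * x₀ + W.a₃))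
    (n : ℕ) (hn : 1 < n) (hvn : v (n : K) = 0) :
    ∃ (x y : K) (h : W.toAffine.Nonsingular x y),
      addOrderOf (Affine.Point.some x y h) = n ∧
      0 ≤ v x ∧ 0 ≤ v y ∧ 0 < v (x - x₀) ∧ 0 < v (y - y₀) := by
  exact s18_final v hv2 W hΔ hint hΔpos hc₄ x₀ y₀ hx₀ hy₀ hsing₀ hsingX hsingY n hn hvn
end
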